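/- arXiv:1107.2735 — 2 statements merged into one kernel-verified Lean document; each statement's English description precedes it below -/
import Mathlib

section
/- Let n ≥ 3 be an integer and let m, α, β satisfy 0 < m ≤ (n−2)/n, α ≠ 0, β ≠ 0, and m·α/β ≤ n − 2. Let η > 0, R₀ > 0, let v be a radial solution of (E) on [0,R₀), and set k = β/α. Then v(r) + k·r·v'(r) > 0 for all r ∈ [0,R₀); moreover v'(r) < 0 for all r ∈ (0,R₀) if α > 0, and v'(r) > 0 for all r ∈ (0,R₀) if α < 0. -/
/-!
Put `k = β / α` and `h = v + k r v'`. In divergence form the equation says that the flux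
`(n - 1) r ^ (n - 1) v ^ (m - 1) v'` has derivative `-α r ^ (n - 1) h`. The flux vanishes at the
origin, so as long as `h` stays positive on `(0, r]` the sign of `v' r` is opposite to that of `α`.

By continuity it remains to exclude a first zero of `h`. If `β ≤ 0` then `k r v' ≥ 0` and
`h ≥ v > 0`. If `β > 0`, differentiating `h` and eliminating `v''` gives
`h' = (m - k (n - 2)) v' + a h` with `a` locally bounded, and `m α ≤ (n - 2) β` makes the first term
nonnegative; hence `h' ≥ a h` and Grönwall's inequality keeps `h` positive.

The behaviour at the origin is the delicate point, since only `v' 0 = 0` is assumed there. The total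
flux `(n - 1) r ^ (n - 1) v ^ (m - 1) v' + β r ^ n v` has derivative `(n β - α) r ^ (n - 1) v`. This
is bounded, so the total flux has a limit at the origin; by the mean value theorem `v'` has the
cluster value `0` there, so the limit is `0`. L'Hôpital's rule then gives the limit of `v' r / r`.
-/

open Real Set

/-- `v` is a radial solution of the elliptic equation
`((n-1)/m)·((v^m)'' + ((n-1)/r)(v^m)') + α v + β r v' = 0` on `[0, R₀)`
with `v > 0`, `v(0) = η`, `v'(0) = 0`. -/
def IsRadialSolOn (n : ℕ) (m α β η R₀ : ℝ) (v : ℝ → ℝ) : Prop :=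
  (∀ r ∈ Set.Ico (0:ℝ) R₀, 0 < v r) ∧
  ContinuousOn v (Set.Ico (0:ℝ) R₀) ∧
  ContDiffOn ℝ 2 v (Set.Ioo (0:ℝ) R₀) ∧
  HasDerivWithinAt v 0 (Set.Ico (0:ℝ) R₀) 0 ∧
  v 0 = η ∧
  ∀ r ∈ Set.Ioo (0:ℝ) R₀,
    (((n : ℝ) - 1) / m) * (deriv (deriv (fun s => v s ^ m)) r
      + (((n : ℝ) - 1) / r) * deriv (fun s => v s ^ m) r)
    + α * v r + β * r * deriv v r = 0

open Filter Topology Asymptotics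

theorem continuousOn_Ico_of_tendsto_nhdsGT {X Y : Type*} [TopologicalSpace X] [LinearOrder X]
    [OrderTopology X] [TopologicalSpace Y] {f : X → Y} {a b : X} (hf : ContinuousOn f (Ioo a b))
    (ha : Tendsto f (𝓝[>] a) (𝓝 (f a))) : ContinuousOn f (Ico a b) := by
  rintro x ⟨hax, hxb⟩
  rcases hax.eq_or_lt with rfl | hax
  · exact (continuousWithinAt_Ioi_iff_Ici.1 ha).mono Ico_subset_Ici_self
  · exact (hf.continuousAt (Ioo_mem_nhds hax hxb)).continuousWithinAt

theorem forall_lt_of_continuousOn_Ico {X Y : Type*} [TopologicalSpace X]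
    [ConditionallyCompleteLinearOrder X] [OrderTopology X] [TopologicalSpace Y] [LinearOrder Y]
    [ClosedIicTopology Y] {f : X → Y} {a b : X} {c : Y} (hf : ContinuousOn f (Ico a b))
    (ih : ∀ x ∈ Ico a b, (∀ y ∈ Ico a x, c < f y) → c < f x) : ∀ x ∈ Ico a b, c < f x := by
  by_contra! ⟨x, hx, hfx⟩
  have hcompact : IsCompact (Icc a x ∩ f ⁻¹' Iic c) :=
    isCompact_Icc.of_isClosed_subset ((hf.mono
      (Icc_subset_Ico_right hx.2)).preimage_isClosed_of_isClosed isClosed_Icc isClosed_Iic)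
      inter_subset_left
  obtain ⟨z, ⟨hz, hfz⟩, hmin⟩ := hcompact.exists_isLeast ⟨x, ⟨hx.1, le_rfl⟩, hfx⟩
  refine (ih z ⟨hz.1, hz.2.trans_lt hx.2⟩ fun y hy ↦ ?_).not_ge hfz
  by_contra! hfy
  exact hy.2.not_ge (hmin ⟨⟨hy.1, hy.2.le.trans hz.2⟩, hfy⟩)

theorem tendsto_pow_nhdsGT_zero {M : Type*} [MonoidWithZero M] [TopologicalSpace M]
    [ContinuousMul M] [Preorder M] {k : ℕ} (hk : k ≠ 0) :
    Tendsto (fun x : M ↦ x ^ k) (𝓝[>] 0) (𝓝 0) := by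
  simpa [hk] using ((continuous_pow k).tendsto (0 : M)).mono_left nhdsWithin_le_nhds

theorem mapClusterPt_deriv_nhdsGT {f : ℝ → ℝ} {f' a b : ℝ} (hab : a < b)
    (hf : ContinuousOn f (Ico a b)) (hd : DifferentiableOn ℝ f (Ioo a b))
    (ha : HasDerivWithinAt f f' (Ioi a) a) : MapClusterPt f' (𝓝[>] a) (deriv f) := by
  rw [mapClusterPt_iff_frequently]
  intro s hs
  rw [frequently_iff]
  intro U hU
  obtain ⟨c, hac, hcU⟩ := mem_nhdsGT_iff_exists_Ioo_subset.1 hU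
  have hslope : ∀ᶠ x in 𝓝[>] a, slope f a x ∈ s :=
    (hasDerivWithinAt_iff_tendsto_slope' self_notMem_Ioi).1 ha hs
  obtain ⟨x, hxs, hax, hx⟩ := (hslope.and (Ioo_mem_nhdsGT (lt_min hac hab))).exists
  obtain ⟨hxc, hxb⟩ := lt_min_iff.1 hx
  obtain ⟨ξ, hξ, hξ'⟩ := exists_deriv_eq_slope' f hax (hf.mono (Icc_subset_Ico_right hxb))
    (hd.mono (Ioo_subset_Ioo_right hxb.le))
  exact ⟨ξ, hcU ⟨hξ.1, hξ.2.trans hxc⟩, hξ' ▸ hxs⟩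

theorem tendsto_nhdsGT_of_mapClusterPt_of_isBigO_one {f f' : ℝ → ℝ} {a l : ℝ}
    (hl : MapClusterPt l (𝓝[>] a) f) (hf : ∀ᶠ x in 𝓝[>] a, HasDerivAt f (f' x) x)
    (hf' : f' =O[𝓝[>] a] (1 : ℝ → ℝ)) : Tendsto f (𝓝[>] a) (𝓝 l) := by
  obtain ⟨C, hC⟩ := hf'.bound
  obtain ⟨b, hab, hb⟩ := mem_nhdsGT_iff_exists_Ioo_subset.1 (hf.and hC)
  have hlip : LipschitzOnWith C.toNNReal f (Ioo a b) :=
    (convex_Ioo a b).lipschitzOnWith_of_nnnorm_hasDerivWithin_le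
      (fun x hx ↦ (hb hx).1.hasDerivWithinAt) fun x hx ↦ by
        simpa using NNReal.le_toNNReal_of_coe_le (by simpa using (hb hx).2)
  obtain ⟨g, hg, hfg⟩ := hlip.extend_real
  have hlim : Tendsto f (𝓝[>] a) (𝓝 (g a)) :=
    (hg.continuous.continuousWithinAt (s := Ioi a)).tendsto.congr'
      (hfg.symm.eventuallyEq_of_mem (Ioo_mem_nhdsGT hab))
  have hla : l = g a := eq_of_nhds_neBot (hl.neBot.mono (inf_le_inf_left _ hlim))
  exact hla ▸ hlim

theorem mul_exp_le_of_forall_mul_le_deriv {f f' : ℝ → ℝ} {a b c : ℝ} (hab : a ≤ b)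
    (hf : ContinuousOn f (Icc a b)) (hd : ∀ x ∈ Ioo a b, HasDerivAt f (f' x) x)
    (hle : ∀ x ∈ Ioo a b, c * f x ≤ f' x) : f a * exp (c * (b - a)) ≤ f b := by
  have hmono : MonotoneOn (fun x ↦ f x * exp (-c * x)) (Icc a b) := by
    refine monotoneOn_of_hasDerivWithinAt_nonneg (f' := fun x ↦ (f' x - c * f x) * exp (-c * x))
      (convex_Icc a b) (hf.mul (by fun_prop)) ?_ ?_ <;>
      rw [interior_Icc] <;> intro x hx
    · have hexp : HasDerivAt (fun y ↦ exp (-c * y)) (exp (-c * x) * -c) x := by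
        simpa using ((hasDerivAt_id' x).const_mul (-c)).exp
      exact (((hd x hx).mul hexp).congr_deriv (by ring)).hasDerivWithinAt
    · exact mul_nonneg (sub_nonneg.2 (hle x hx)) (exp_nonneg _)
  calc f a * exp (c * (b - a)) = f a * exp (-c * a) * exp (c * b) := by
        rw [mul_assoc, ← exp_add]; ring_nf
    _ ≤ f b * exp (-c * b) * exp (c * b) :=
        mul_le_mul_of_nonneg_right
          (hmono (left_mem_Icc.2 hab) (right_mem_Icc.2 hab) hab) (exp_nonneg _)
    _ = f b := by rw [mul_assoc, ← exp_add]; simp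

/-- The flux `(n - 1) r ^ (n - 1) v ^ (m - 1) v'` of the diffusion term: its derivative is
`r ^ (n - 1)` times the term `((n - 1) / m) Δ (v ^ m)` of the equation. -/
noncomputable def radialFlux (n : ℕ) (m : ℝ) (v : ℝ → ℝ) (r : ℝ) : ℝ :=
  (n - 1) * (r ^ (n - 1) * (v r ^ (m - 1) * deriv v r))

/-- The flux of the equation in the divergence form
`((n - 1) / m) Δ (v ^ m) + β div (x v) = (n β - α) v`, multiplied by `r ^ (n - 1)`. -/
noncomputable def totalFlux (n : ℕ) (m β : ℝ) (v : ℝ → ℝ) (r : ℝ) : ℝ :=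
  radialFlux n m v r + β * (r ^ n * v r)

/-- The function `v + k r v'`, the derivative at `t = 1` of the rescaled profile
`t * v (t ^ k * r)`; the theorem is its positivity for `k = β / α`. -/
noncomputable def scalingDeriv (k : ℝ) (v : ℝ → ℝ) (r : ℝ) : ℝ :=
  v r + k * r * deriv v r

namespace IsRadialSolOn

variable {n : ℕ} {m α β η R₀ r : ℝ} {v : ℝ → ℝ}

theorem pos (hv : IsRadialSolOn n m α β η R₀ v) (hr : r ∈ Ico 0 R₀) : 0 < v r :=
  hv.1 r hr

theorem continuousOn (hv : IsRadialSolOn n m α β η R₀ v) : ContinuousOn v (Ico 0 R₀) :=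
  hv.2.1

theorem apply_zero (hv : IsRadialSolOn n m α β η R₀ v) : v 0 = η :=
  hv.2.2.2.2.1

theorem differentiableOn (hv : IsRadialSolOn n m α β η R₀ v) : DifferentiableOn ℝ v (Ioo 0 R₀) :=
  hv.2.2.1.differentiableOn two_ne_zero

theorem hasDerivAt (hv : IsRadialSolOn n m α β η R₀ v) (hr : r ∈ Ioo 0 R₀) :
    HasDerivAt v (deriv v r) r :=
  (hv.differentiableOn.differentiableAt (Ioo_mem_nhds hr.1 hr.2)).hasDerivAt

theorem hasDerivAt_deriv (hv : IsRadialSolOn n m α β η R₀ v) (hr : r ∈ Ioo 0 R₀) :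
    HasDerivAt (deriv v) (deriv (deriv v) r) r :=
  (((hv.2.2.1.deriv_of_isOpen isOpen_Ioo (m := 1) le_rfl).differentiableOn
    one_ne_zero).differentiableAt (Ioo_mem_nhds hr.1 hr.2)).hasDerivAt

theorem eta_pos (hv : IsRadialSolOn n m α β η R₀ v) (hR₀ : 0 < R₀) : 0 < η :=
  hv.apply_zero ▸ hv.pos ⟨le_rfl, hR₀⟩

theorem tendsto_nhdsGT_zero (hv : IsRadialSolOn n m α β η R₀ v) (hR₀ : 0 < R₀) :
    Tendsto v (𝓝[>] 0) (𝓝 η) := by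
  have hcont : ContinuousWithinAt v (Ioo 0 R₀) 0 :=
    (hv.continuousOn 0 ⟨le_rfl, hR₀⟩).mono Ioo_subset_Ico_self
  rwa [ContinuousWithinAt, nhdsWithin_Ioo_eq_nhdsGT hR₀, hv.apply_zero] at hcont

theorem mapClusterPt_deriv (hv : IsRadialSolOn n m α β η R₀ v) (hR₀ : 0 < R₀) :
    MapClusterPt 0 (𝓝[>] 0) (deriv v) :=
  mapClusterPt_deriv_nhdsGT hR₀ hv.continuousOn hv.differentiableOn <|
    (hv.2.2.2.1.mono Ioo_subset_Ico_self).mono_of_mem_nhdsWithin (Ioo_mem_nhdsGT hR₀)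

theorem hasDerivAt_rpow (hv : IsRadialSolOn n m α β η R₀ v) (p : ℝ) (hr : r ∈ Ioo 0 R₀) :
    HasDerivAt (fun s ↦ v s ^ p) (p * (v r ^ (p - 1) * deriv v r)) r :=
  ((hv.hasDerivAt hr).rpow_const (.inl (hv.pos (Ioo_subset_Ico_self hr)).ne')).congr_deriv (by ring)

theorem hasDerivAt_rpow_mul_deriv (hv : IsRadialSolOn n m α β η R₀ v) (p : ℝ)
    (hr : r ∈ Ioo 0 R₀) :
    HasDerivAt (fun s ↦ v s ^ p * deriv v s)
      (v r ^ p * (p * deriv v r ^ 2 / v r + deriv (deriv v) r)) r := by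
  refine ((hv.hasDerivAt_rpow p hr).mul (hv.hasDerivAt_deriv hr)).congr_deriv ?_
  rw [rpow_sub_one (hv.pos (Ioo_subset_Ico_self hr)).ne']
  ring

theorem deriv_deriv_rpow (hv : IsRadialSolOn n m α β η R₀ v) (p : ℝ) (hr : r ∈ Ioo 0 R₀) :
    deriv (deriv fun s ↦ v s ^ p) r =
      p * (v r ^ (p - 1) * ((p - 1) * deriv v r ^ 2 / v r + deriv (deriv v) r)) := by
  have hderiv : deriv (fun s ↦ v s ^ p) =ᶠ[𝓝 r] fun s ↦ p * (v s ^ (p - 1) * deriv v s) := by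
    filter_upwards [Ioo_mem_nhds hr.1 hr.2] with s hs using (hv.hasDerivAt_rpow p hs).deriv
  rw [hderiv.deriv_eq, ((hv.hasDerivAt_rpow_mul_deriv (p - 1) hr).const_mul p).deriv]

theorem nondivergence_eq (hv : IsRadialSolOn n m α β η R₀ v) (hm : m ≠ 0) (hr : r ∈ Ioo 0 R₀) :
    (n - 1) * (v r ^ (m - 1) * ((m - 1) * deriv v r ^ 2 / v r + deriv (deriv v) r
      + (n - 1) / r * deriv v r)) = -(α * v r + β * r * deriv v r) := by
  have hode := hv.2.2.2.2.2 r hr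
  rw [hv.deriv_deriv_rpow m hr, (hv.hasDerivAt_rpow m hr).deriv] at hode
  rw [eq_neg_iff_add_eq_zero, ← hode]
  field_simp
  ring

theorem hasDerivAt_radialFlux (hv : IsRadialSolOn n m α β η R₀ v) (hn : 2 ≤ n) (hm : m ≠ 0)
    (hr : r ∈ Ioo 0 R₀) :
    HasDerivAt (radialFlux n m v) (-(r ^ (n - 1) * (α * v r + β * r * deriv v r))) r := by
  refine (((hasDerivAt_pow (n - 1) r).mul (hv.hasDerivAt_rpow_mul_deriv (m - 1) hr)).const_mul
    ((n : ℝ) - 1)).congr_deriv ?_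
  have hpow : r ^ (n - 1) = r * r ^ (n - 1 - 1) := (mul_pow_sub_one (by omega) r).symm
  have hr₀ : r ≠ 0 := hr.1.ne'
  rw [← mul_neg, ← hv.nondivergence_eq hm hr, hpow]
  push_cast [Nat.cast_sub (by omega : 1 ≤ n)]
  field_simp
  ring

theorem hasDerivAt_totalFlux (hv : IsRadialSolOn n m α β η R₀ v) (hn : 2 ≤ n) (hm : m ≠ 0)
    (hr : r ∈ Ioo 0 R₀) :
    HasDerivAt (totalFlux n m β v) ((n * β - α) * (r ^ (n - 1) * v r)) r := by
  refine ((hv.hasDerivAt_radialFlux hn hm hr).add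
    (((hasDerivAt_pow n r).mul (hv.hasDerivAt hr)).const_mul β)).congr_deriv ?_
  rw [← mul_pow_sub_one (by omega : n ≠ 0) r]
  ring

theorem tendsto_totalFlux (hv : IsRadialSolOn n m α β η R₀ v) (hn : 2 ≤ n) (hm : m ≠ 0)
    (hR₀ : 0 < R₀) :
    Tendsto (totalFlux n m β v) (𝓝[>] 0) (𝓝 0) := by
  have hv₀ := hv.tendsto_nhdsGT_zero hR₀
  refine tendsto_nhdsGT_of_mapClusterPt_of_isBigO_one ?_
    (f' := fun r ↦ (n * β - α) * (r ^ (n - 1) * v r)) ?_ ?_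
  · obtain ⟨U, hU, hderiv⟩ := mapClusterPt_iff_ultrafilter.1 (hv.mapClusterPt_deriv hR₀)
    refine mapClusterPt_iff_ultrafilter.2 ⟨U, hU, ?_⟩
    have hpow {k : ℕ} (hk : k ≠ 0) : Tendsto (fun r : ℝ ↦ r ^ k) U (𝓝 0) :=
      (tendsto_pow_nhdsGT_zero hk).mono_left hU
    have hvU := hv₀.mono_left hU
    have hrpow := hvU.rpow_const (p := m - 1) (.inl (hv.eta_pos hR₀).ne')
    have hflux : Tendsto (radialFlux n m v) U (𝓝 0) := by
      unfold radialFlux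
      simpa using ((hpow (by omega : n - 1 ≠ 0)).mul (hrpow.mul hderiv)).const_mul ((n : ℝ) - 1)
    unfold totalFlux
    simpa using hflux.add (((hpow (by omega : n ≠ 0)).mul hvU).const_mul β)
  · filter_upwards [Ioo_mem_nhdsGT hR₀] with r hr using hv.hasDerivAt_totalFlux hn hm hr
  · exact (((tendsto_pow_nhdsGT_zero (by omega)).mul hv₀).const_mul _).isBigO_one ℝ

theorem tendsto_totalFlux_div_pow (hv : IsRadialSolOn n m α β η R₀ v) (hn : 2 ≤ n) (hm : m ≠ 0)
    (hR₀ : 0 < R₀) :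
    Tendsto (fun r ↦ totalFlux n m β v r / r ^ n) (𝓝[>] 0)
      (𝓝 ((n * β - α) / n * η)) := by
  refine HasDerivAt.lhopital_zero_right_on_Ioo hR₀ (fun r hr ↦ hv.hasDerivAt_totalFlux hn hm hr)
    (fun r _ ↦ hasDerivAt_pow n r) (fun r hr ↦ ?_) (hv.tendsto_totalFlux hn hm hR₀)
    (tendsto_pow_nhdsGT_zero (by omega)) ?_
  · have := hr.1
    positivity
  · refine ((hv.tendsto_nhdsGT_zero hR₀).const_mul _).congr' ?_
    filter_upwards [self_mem_nhdsWithin] with r (hr : 0 < r)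
    field_simp

theorem tendsto_deriv_div (hv : IsRadialSolOn n m α β η R₀ v) (hn : 2 ≤ n) (hm : m ≠ 0)
    (hR₀ : 0 < R₀) :
    Tendsto (fun r ↦ deriv v r / r) (𝓝[>] 0) (𝓝 (-(α * η ^ (2 - m) / (n * (n - 1))))) := by
  have hn₁ : (n : ℝ) - 1 ≠ 0 := (sub_pos.2 (Nat.one_lt_cast.2 hn)).ne'
  have hη := hv.eta_pos hR₀
  have hv₀ := hv.tendsto_nhdsGT_zero hR₀
  have hlim := (((hv.tendsto_totalFlux_div_pow hn hm hR₀).sub (hv₀.const_mul β)).mul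
    (hv₀.rpow_const (p := 1 - m) (.inl hη.ne'))).div_const ((n : ℝ) - 1)
  convert hlim.congr' ?_ using 2
  · have hpow : η ^ (2 - m) = η * η ^ (1 - m) := by
      rw [(by ring : 2 - m = 1 + (1 - m)), rpow_add hη, rpow_one]
    rw [hpow]
    field_simp
    ring
  · filter_upwards [Ioo_mem_nhdsGT hR₀] with r hr
    have hr₀ : r ≠ 0 := hr.1.ne'
    have hinv : v r ^ (m - 1) * v r ^ (1 - m) = 1 := by
      rw [← rpow_add (hv.pos (Ioo_subset_Ico_self hr))]; simp
    have hpow : r ^ n = r * r ^ (n - 1) := (mul_pow_sub_one (by omega) r).symm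
    rw [totalFlux, radialFlux, hpow]
    field_simp
    linear_combination ((n : ℝ) - 1) * deriv v r * hinv

theorem tendsto_mul_deriv (hv : IsRadialSolOn n m α β η R₀ v) (hn : 2 ≤ n) (hm : m ≠ 0)
    (hR₀ : 0 < R₀) : Tendsto (fun r ↦ r * deriv v r) (𝓝[>] 0) (𝓝 0) := by
  have hid : Tendsto (fun r : ℝ ↦ r) (𝓝[>] 0) (𝓝 0) := tendsto_id.mono_left nhdsWithin_le_nhds
  have hlim := (hid.mul hid).mul (hv.tendsto_deriv_div hn hm hR₀)
  rw [mul_zero, zero_mul] at hlim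
  refine hlim.congr' ?_
  filter_upwards [self_mem_nhdsWithin] with r (hr : 0 < r)
  field_simp

theorem continuousOn_mul_deriv (hv : IsRadialSolOn n m α β η R₀ v) (hn : 2 ≤ n) (hm : m ≠ 0) :
    ContinuousOn (fun r ↦ r * deriv v r) (Ico 0 R₀) := by
  rcases le_or_gt R₀ 0 with hR₀ | hR₀
  · simp [Ico_eq_empty_of_le hR₀]
  · refine continuousOn_Ico_of_tendsto_nhdsGT (fun r hr ↦ ?_) ?_
    · exact (continuousAt_id.mul (hv.hasDerivAt_deriv hr).continuousAt).continuousWithinAt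
    · simpa using hv.tendsto_mul_deriv hn hm hR₀

theorem continuousOn_scalingDeriv (hv : IsRadialSolOn n m α β η R₀ v) (hn : 2 ≤ n) (hm : m ≠ 0)
    (k : ℝ) : ContinuousOn (scalingDeriv k v) (Ico 0 R₀) :=
  (hv.continuousOn.add ((hv.continuousOn_mul_deriv hn hm).const_mul k)).congr
    fun r _ ↦ by simp only [scalingDeriv, Pi.add_apply]; ring

theorem continuousOn_radialFlux (hv : IsRadialSolOn n m α β η R₀ v) (hn : 2 ≤ n) (hm : m ≠ 0) :
    ContinuousOn (radialFlux n m v) (Ico 0 R₀) := by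
  have hrpow : ContinuousOn (fun r ↦ v r ^ (m - 1)) (Ico 0 R₀) :=
    hv.continuousOn.rpow_const fun r hr ↦ .inl (hv.pos hr).ne'
  refine (((continuousOn_id.pow (n - 2)).mul
    (hrpow.mul (hv.continuousOn_mul_deriv hn hm))).const_mul ((n : ℝ) - 1)).congr fun r _ ↦ ?_
  simp only [radialFlux, id, Pi.mul_apply, Pi.pow_apply, (by omega : n - 1 = n - 2 + 1)]
  ring

theorem mul_deriv_neg_of_scalingDeriv_pos (hv : IsRadialSolOn n m α β η R₀ v) (hn : 2 ≤ n)
    (hm : m ≠ 0) (hα : α ≠ 0) (hr : r ∈ Ioo 0 R₀)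
    (hpos : ∀ s ∈ Ioo 0 r, 0 < scalingDeriv (β / α) v s) : α * deriv v r < 0 := by
  have hn₁ : (0 : ℝ) < n - 1 := sub_pos.2 (Nat.one_lt_cast.2 hn)
  have hanti : StrictAntiOn (fun s ↦ α * radialFlux n m v s) (Icc 0 r) := by
    refine strictAntiOn_of_hasDerivWithinAt_neg
      (f' := fun s ↦ -(α ^ 2 * (s ^ (n - 1) * scalingDeriv (β / α) v s))) (convex_Icc 0 r)
      (((hv.continuousOn_radialFlux hn hm).mono (Icc_subset_Ico_right hr.2)).const_mul α) ?_ ?_ <;>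
      rw [interior_Icc] <;> intro s hs
    · refine (((hv.hasDerivAt_radialFlux hn hm ⟨hs.1, hs.2.trans hr.2⟩).const_mul
        α).congr_deriv ?_).hasDerivWithinAt
      rw [scalingDeriv]
      field_simp
    · have := hs.1
      have := hpos s hs
      exact neg_neg_of_pos (by positivity)
  have hflux₀ : radialFlux n m v 0 = 0 := by
    simp [radialFlux, zero_pow (by omega : n - 1 ≠ 0)]
  have hflux : (n - 1) * (r ^ (n - 1) * v r ^ (m - 1)) * (α * deriv v r) < 0 := by
    have hlt := hanti (left_mem_Icc.2 hr.1.le) (right_mem_Icc.2 hr.1.le) hr.1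
    simp only [hflux₀, mul_zero] at hlt
    exact hlt.trans_eq' (by rw [radialFlux]; ring)
  have := hr.1
  have := hv.pos (Ioo_subset_Ico_self hr)
  exact neg_of_mul_neg_right hflux (by positivity)

theorem hasDerivAt_scalingDeriv (hv : IsRadialSolOn n m α β η R₀ v) (hn : 2 ≤ n) (hm : m ≠ 0)
    (hα : α ≠ 0) (hr : r ∈ Ioo 0 R₀) :
    HasDerivAt (scalingDeriv (β / α) v)
      ((m - β / α * (n - 2)) * deriv v r
        + ((1 - m) * deriv v r / v r - β / (n - 1) * r * v r ^ (1 - m))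
          * scalingDeriv (β / α) v r) r := by
  have hn₁ : (n : ℝ) - 1 ≠ 0 := (sub_pos.2 (Nat.one_lt_cast.2 hn)).ne'
  have hvr := hv.pos (Ioo_subset_Ico_self hr)
  have hr₀ : r ≠ 0 := hr.1.ne'
  refine ((hv.hasDerivAt hr).add
    (((hasDerivAt_id' r).const_mul (β / α)).mul (hv.hasDerivAt_deriv hr))).congr_deriv ?_
  have hrpow : v r ^ (1 - m) = (v r ^ (m - 1))⁻¹ := by rw [← rpow_neg hvr.le, neg_sub]
  have hode := hv.nondivergence_eq hm hr
  rw [scalingDeriv, hrpow]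
  field_simp at hode ⊢
  linear_combination β * hode

theorem scalingDeriv_pos_of_mul_deriv_nonpos (hv : IsRadialSolOn n m α β η R₀ v) (hα : α ≠ 0)
    (hβ : β ≤ 0) (hr : r ∈ Ico 0 R₀) (hneg : α * deriv v r ≤ 0) :
    0 < scalingDeriv (β / α) v r := by
  have hsplit : scalingDeriv (β / α) v r = v r + r * (-β * -(α * deriv v r)) / α ^ 2 := by
    rw [scalingDeriv]
    field_simp
  have := hr.1
  have := mul_nonneg (neg_nonneg.2 hβ) (neg_nonneg.2 hneg)
  have := hv.pos hr
  rw [hsplit]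
  positivity

theorem scalingDeriv_pos_of_forall_Ico (hv : IsRadialSolOn n m α β η R₀ v) (hn : 2 ≤ n)
    (hm : m ≠ 0) (hα : α ≠ 0) (hmαβ : m * α ≤ (n - 2) * β) {a b : ℝ} (ha : 0 < a)
    (hab : a < b) (hb : b < R₀) (hpos : ∀ r ∈ Ico a b, 0 < scalingDeriv (β / α) v r)
    (hneg : ∀ r ∈ Ioo a b, α * deriv v r ≤ 0) : 0 < scalingDeriv (β / α) v b := by
  have hsub : Icc a b ⊆ Ioo 0 R₀ := fun r hr ↦ ⟨ha.trans_le hr.1, hr.2.trans_lt hb⟩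
  have hvcont : ContinuousOn v (Icc a b) := hv.continuousOn.mono (hsub.trans Ioo_subset_Ico_self)
  have hvne (r) (hr : r ∈ Icc a b) : v r ≠ 0 := (hv.pos (Ioo_subset_Ico_self (hsub hr))).ne'
  have hv'cont : ContinuousOn (deriv v) (Icc a b) :=
    fun r hr ↦ (hv.hasDerivAt_deriv (hsub hr)).continuousAt.continuousWithinAt
  have hcoeff : ContinuousOn
      (fun r ↦ (1 - m) * deriv v r / v r - β / (n - 1) * r * v r ^ (1 - m)) (Icc a b) :=
    ((hv'cont.const_mul _).div hvcont hvne).sub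
      ((continuousOn_id.const_mul _).mul (hvcont.rpow_const fun r hr ↦ .inl (hvne r hr)))
  obtain ⟨C, hC⟩ := isCompact_Icc.exists_bound_of_continuousOn hcoeff
  have hdrift (r) (hr : r ∈ Ioo a b) : 0 ≤ (m - β / α * (n - 2)) * deriv v r := by
    have hsplit : (m - β / α * (n - 2)) * deriv v r
        = ((n - 2) * β - m * α) * -(α * deriv v r) / α ^ 2 := by
      field_simp
      ring
    rw [hsplit]
    exact div_nonneg (mul_nonneg (sub_nonneg.2 hmαβ) (neg_nonneg.2 (hneg r hr))) (sq_nonneg α)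
  refine (mul_pos (hpos a (left_mem_Ico.2 hab)) (exp_pos _)).trans_le
    (mul_exp_le_of_forall_mul_le_deriv (c := -C) hab.le
      ((hv.continuousOn_scalingDeriv hn hm _).mono (hsub.trans Ioo_subset_Ico_self))
      (fun r hr ↦ hv.hasDerivAt_scalingDeriv hn hm hα (hsub (Ioo_subset_Icc_self hr)))
      fun r hr ↦ ?_)
  have hbound := mul_le_mul_of_nonneg_right (neg_le_of_abs_le (hC r (Ioo_subset_Icc_self hr)))
    (hpos r (Ioo_subset_Ico_self hr)).le
  linarith [hdrift r hr]

theorem scalingDeriv_pos (hv : IsRadialSolOn n m α β η R₀ v) (hn : 2 ≤ n) (hm : m ≠ 0)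
    (hα : α ≠ 0) (hmαβ : 0 < β → m * α ≤ (n - 2) * β) (hr : r ∈ Ico 0 R₀) :
    0 < scalingDeriv (β / α) v r := by
  refine forall_lt_of_continuousOn_Ico (hv.continuousOn_scalingDeriv hn hm _)
    (fun b hb hpos ↦ ?_) r hr
  rcases hb.1.eq_or_lt with rfl | hb₀
  · simpa [scalingDeriv] using hv.pos hb
  have hneg (s) (hs : s ∈ Ioc 0 b) : α * deriv v s ≤ 0 :=
    (hv.mul_deriv_neg_of_scalingDeriv_pos hn hm hα ⟨hs.1, hs.2.trans_lt hb.2⟩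
      fun t ht ↦ hpos t ⟨ht.1.le, ht.2.trans_le hs.2⟩).le
  rcases le_or_gt β 0 with hβ | hβ
  · exact hv.scalingDeriv_pos_of_mul_deriv_nonpos hα hβ hb (hneg b (right_mem_Ioc.2 hb₀))
  · exact hv.scalingDeriv_pos_of_forall_Ico hn hm hα (hmαβ hβ) (half_pos hb₀) (half_lt_self hb₀)
      hb.2 (fun s hs ↦ hpos s ⟨(half_pos hb₀).le.trans hs.1, hs.2⟩)
      fun s hs ↦ hneg s ⟨(half_pos hb₀).trans hs.1, hs.2.le⟩

end IsRadialSolOn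

theorem stmt0_general {n : ℕ} (hn : 2 ≤ n) {m α β η R₀ : ℝ} (hm : m ≠ 0) (hα : α ≠ 0)
    (hmαβ : 0 < β → m * α ≤ (n - 2) * β) {v : ℝ → ℝ} (hv : IsRadialSolOn n m α β η R₀ v) :
    (∀ r ∈ Ico 0 R₀, 0 < v r + (β / α) * r * deriv v r) ∧
    (0 < α → ∀ r ∈ Ioo 0 R₀, deriv v r < 0) ∧
    (α < 0 → ∀ r ∈ Ioo 0 R₀, 0 < deriv v r) := by
  have hpos (r) (hr : r ∈ Ico 0 R₀) : 0 < scalingDeriv (β / α) v r :=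
    hv.scalingDeriv_pos hn hm hα hmαβ hr
  have hneg (r) (hr : r ∈ Ioo 0 R₀) : α * deriv v r < 0 :=
    hv.mul_deriv_neg_of_scalingDeriv_pos hn hm hα hr
      fun s hs ↦ hpos s ⟨hs.1.le, hs.2.trans hr.2⟩
  exact ⟨hpos, fun hα' r hr ↦ neg_of_mul_neg_right (hneg r hr) hα'.le,
    fun hα' r hr ↦ pos_of_mul_neg_right (hneg r hr) hα'.le⟩

theorem stmt0 (n : ℕ) (hn : 3 ≤ n) (m α β η R₀ : ℝ)
    (hm : 0 < m) (hm' : m ≤ ((n : ℝ) - 2) / n)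
    (hα : α ≠ 0) (hβ : β ≠ 0) (hmαβ : m * α / β ≤ (n : ℝ) - 2)
    (hη : 0 < η) (hR₀ : 0 < R₀) (v : ℝ → ℝ)
    (hv : IsRadialSolOn n m α β η R₀ v) :
    (∀ r ∈ Set.Ico (0:ℝ) R₀, 0 < v r + (β / α) * r * deriv v r) ∧
    (0 < α → ∀ r ∈ Set.Ioo (0:ℝ) R₀, deriv v r < 0) ∧
    (α < 0 → ∀ r ∈ Set.Ioo (0:ℝ) R₀, 0 < deriv v r) := by
  exact stmt0_general (by omega) hm.ne' hα (fun hβ' ↦ (div_le_iff₀ hβ').1 hmαβ) hv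
end

section
/- Let n ≥ 3 be an integer, let η > 0, and let α, β be real numbers satisfying β > 0 or α = 0. For each m ∈ (0, (n−2)/n] for which a radial solution of (E) on [0,∞) exists (in particular for all sufficiently small m > 0), let v^{(m)} denote this radial solution. Then there exists a positive function u : [0,∞) → ℝ, twice continuously differentiable on (0,∞), with u(0) = η, u'(0) = 0, satisfying (n−1)·((log u)''(r) + ((n−1)/r)·(log u)'(r)) + α·u(r) + β·r·u'(r) = 0 for all r > 0, such that v^{(m)} converges to u uniformly on every compact subset of [0,∞) as m → 0⁺. -/
open Real Set Filter

/-- `v` is a radial solution of the elliptic equation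
`((n-1)/m)·((v^m)'' + ((n-1)/r)(v^m)') + α v + β r v' = 0` on `[0, ∞)`
with `v > 0`, `v(0) = η`, `v'(0) = 0`. -/
def IsRadialSol (n : ℕ) (m α β η : ℝ) (v : ℝ → ℝ) : Prop :=
  (∀ r ∈ Set.Ici (0:ℝ), 0 < v r) ∧
  ContinuousOn v (Set.Ici (0:ℝ)) ∧
  ContDiffOn ℝ 2 v (Set.Ioi (0:ℝ)) ∧
  HasDerivWithinAt v 0 (Set.Ici (0:ℝ)) 0 ∧
  v 0 = η ∧
  ∀ r ∈ Set.Ioi (0:ℝ),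
    (((n : ℝ) - 1) / m) * (deriv (deriv (fun s => v s ^ m)) r
      + (((n : ℝ) - 1) / r) * deriv (fun s => v s ^ m) r)
    + α * v r + β * r * deriv v r = 0

/-! For `v = exp w`, integrating the radial equation over the ball of radius `r` gives
`w' = exp (-m w) r G(exp w)`, where `G h` combines `h r` and the mean of `h` over that ball
(`radialVelocity`). This functional differential equation is regular both at `r = 0` and at
`m = 0`, where it becomes the limit equation, and it is causal: its right-hand side depends on `w`
only through the past and is locally Lipschitz for the sup norm. Hence the theory of ordinary
differential equations (Picard iteration, Gronwall's inequality) applies. Two barrier arguments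
confine `r w'` between `0` and `-α / β`, uniformly in `m` near `0`, so that solutions are global and
bounded on compact sets independently of `m`, and Gronwall's inequality gives the convergence. -/

section Barrier

open scoped Topology

lemma forall_lt_of_forall_lt_before {f : ℝ → ℝ} {R c : ℝ} (hf : Continuous f)
    (h : ∀ t ∈ Icc 0 R, (∀ s ∈ Ico 0 t, f s < c) → f t < c) : ∀ t ∈ Icc 0 R, f t < c := by
  by_contra! ⟨t, ht, hct⟩
  obtain ⟨x, ⟨hxR, hcx⟩, hmin⟩ :=
    (isCompact_Icc.inter_right (isClosed_le continuous_const hf)).exists_isLeast ⟨t, ht, hct⟩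
  refine (h x hxR fun s hs ↦ ?_).not_ge hcx
  by_contra! hcs
  exact (hmin ⟨⟨hs.1, hs.2.le.trans hxR.2⟩, hcs⟩).not_gt hs.2

lemma abs_lt_of_abs_deriv_le {f f' B B' : ℝ → ℝ} {R : ℝ} (hf : Continuous f)
    (hf' : ∀ t ∈ Ico 0 R, HasDerivWithinAt f (f' t) (Ici 0) t)
    (hB : ∀ t, HasDerivAt B (B' t) t) (h₀ : |f 0| < B 0)
    (hle : ∀ t ∈ Ico 0 R, (∀ s ∈ Icc 0 t, |f s| ≤ B s) → |f' t| ≤ B' t) :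
    ∀ t ∈ Icc 0 R, |f t| < B t := by
  have hBc : Continuous B := continuous_iff_continuousAt.2 fun t ↦ (hB t).continuousAt
  suffices ∀ t ∈ Icc 0 R, |f t| - B t < 0 from fun t ht ↦ sub_neg.1 (this t ht)
  refine forall_lt_of_forall_lt_before (by fun_prop) fun t ht hbefore ↦ ?_
  have hft : ‖f t‖ ≤ B t - (B 0 - |f 0|) :=
    image_norm_le_of_norm_deriv_right_le_deriv_boundary (B := fun s ↦ B s - (B 0 - |f 0|))
      hf.continuousOn
      (fun s hs ↦ (hf' s ⟨hs.1, hs.2.trans_le ht.2⟩).mono (Ici_subset_Ici.2 hs.1))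
      (by simp) (fun s ↦ (hB s).sub_const _)
      (fun s hs ↦ hle s ⟨hs.1, hs.2.trans_le ht.2⟩ fun x hx ↦
        (sub_neg.1 (hbefore x ⟨hx.1, hx.2.trans_lt hs.2⟩)).le)
      ⟨ht.1, le_rfl⟩
  rw [norm_eq_abs] at hft
  linarith

lemma le_of_deriv_neg_of_eq {f f' : ℝ → ℝ} {R c : ℝ} (hf : Continuous f) (h₀ : f 0 < c)
    (hf' : ∀ r ∈ Ioo 0 R, HasDerivAt f (f' r) r) (hneg : ∀ r ∈ Ioo 0 R, f r = c → f' r < 0) :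
    ∀ r ∈ Ioo 0 R, f r ≤ c := by
  intro r hr
  have hnear : ∀ᶠ ε in 𝓝[>] 0, f ε < c :=
    (hf.continuousAt.eventually_lt_const h₀).filter_mono nhdsWithin_le_nhds
  obtain ⟨ε, hfε, hε₀, hεr⟩ := (hnear.and (Ioo_mem_nhdsGT hr.1)).exists
  have hmem : ∀ x ∈ Ico ε r, x ∈ Ioo 0 R := fun x hx ↦ ⟨hε₀.trans_le hx.1, hx.2.trans hr.2⟩
  exact image_le_of_deriv_right_lt_deriv_boundary (B := fun _ ↦ c) (B' := fun _ ↦ 0)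
    hf.continuousOn (fun x hx ↦ (hf' x (hmem x hx)).hasDerivWithinAt) hfε.le
    (fun x ↦ hasDerivAt_const x c) (fun x hx ↦ hneg x (hmem x hx)) ⟨hεr.le, le_rfl⟩

end Barrier

section CausalEquation

open scoped NNReal

variable {N : (ℝ → ℝ) → ℝ → ℝ} {S : Set ℝ} {x₀ R : ℝ} {K : ℝ≥0}

/-- Lipschitz continuity of a causal (Volterra) operator `N` on `[0, R]`: the value `N f t` depends
only on the past `f|[0, t]`, in a `K`-Lipschitz way for the sup norm as long as `f` stays in `S`.
It is the hypothesis under which `w' = N w` behaves like an ordinary differential equation. -/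
def IsCausalLipschitz (N : (ℝ → ℝ) → ℝ → ℝ) (S : Set ℝ) (R : ℝ) (K : ℝ≥0) : Prop :=
  ∀ ⦃f g : ℝ → ℝ⦄, Continuous f → Continuous g → ∀ ⦃t⦄, t ∈ Icc 0 R →
    MapsTo f (Icc 0 t) S → MapsTo g (Icc 0 t) S →
    ∀ ⦃D⦄, (∀ s ∈ Icc 0 t, |f s - g s| ≤ D) → |N f t - N g t| ≤ K * D

/-- The regularity of `N` for which `w' = N w` is well posed as long as `w` stays bounded. -/
structure IsLocallyCausalLipschitz (N : (ℝ → ℝ) → ℝ → ℝ) : Prop where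
  continuous : ∀ ⦃f⦄, Continuous f → Continuous (N f)
  exists_isCausalLipschitz : ∀ L R, ∃ K, IsCausalLipschitz N (Icc (-L) L) R K

/-- `w` solves the functional differential equation `w' = N w` on `[0, R)` with `w 0 = x₀`. The
function is continuous on all of `ℝ` so that `N` may be applied to it; its values on the negative
axis carry no information. -/
structure IsCausalSolution (N : (ℝ → ℝ) → ℝ → ℝ) (x₀ R : ℝ) (w : ℝ → ℝ) : Prop where
  continuous : Continuous w
  initial : w 0 = x₀
  hasDerivWithinAt : ∀ r ∈ Ico 0 R, HasDerivWithinAt w (N w r) (Ici 0) r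

lemma IsCausalLipschitz.congr (hN : IsCausalLipschitz N S R K) {f g : ℝ → ℝ} (hf : Continuous f)
    (hg : Continuous g) {t : ℝ} (ht : t ∈ Icc 0 R) (hfS : MapsTo f (Icc 0 t) S)
    (hfg : EqOn f g (Icc 0 t)) : N f t = N g t := by
  have hle : |N f t - N g t| ≤ K * 0 :=
    hN hf hg ht hfS (hfS.congr hfg) fun s hs ↦ by simp [hfg hs]
  exact sub_eq_zero.1 (abs_nonpos_iff.1 (by simpa using hle))

lemma IsCausalSolution.mono {w : ℝ → ℝ} (hw : IsCausalSolution N x₀ R w) {R' : ℝ} (h : R' ≤ R) :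
    IsCausalSolution N x₀ R' w :=
  ⟨hw.continuous, hw.initial, fun r hr ↦ hw.hasDerivWithinAt r ⟨hr.1, hr.2.trans_le h⟩⟩

lemma IsCausalSolution.hasDerivAt {w : ℝ → ℝ} (hw : IsCausalSolution N x₀ R w) {r : ℝ}
    (hr : r ∈ Ioo 0 R) : HasDerivAt w (N w r) r :=
  (hw.hasDerivWithinAt r ⟨hr.1.le, hr.2⟩).hasDerivAt (Ici_mem_nhds hr.1)

lemma IsCausalSolution.abs_sub_initial_le {w : ℝ → ℝ} (hw : IsCausalSolution N x₀ R w) {κ : ℝ}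
    (hκ : ∀ t ∈ Ico 0 R, |N w t| ≤ κ) : ∀ t ∈ Icc 0 R, |w t - x₀| ≤ κ * t := by
  have h := norm_image_sub_le_of_norm_deriv_right_le_segment hw.continuous.continuousOn
    (fun r hr ↦ (hw.hasDerivWithinAt r hr).mono (Ici_subset_Ici.2 hr.1)) hκ
  simpa [hw.initial] using h

lemma IsCausalSolution.abs_le_add_mul {w : ℝ → ℝ} (hw : IsCausalSolution N x₀ R w) {κ : ℝ}
    (hκ : ∀ t ∈ Ico 0 R, |N w t| ≤ κ) (t : ℝ) (ht : t ∈ Icc 0 R) : |w t| ≤ |x₀| + κ * t := by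
  linarith [hw.abs_sub_initial_le hκ t ht, abs_sub_abs_le_abs_sub (w t) x₀]

/-! ### Continuous dependence and uniqueness -/

lemma IsCausalLipschitz.abs_sub_lt_mul_exp (hN : IsCausalLipschitz N S R K)
    {N' : (ℝ → ℝ) → ℝ → ℝ} {w w' : ℝ → ℝ} (hw : IsCausalSolution N x₀ R w)
    (hw' : IsCausalSolution N' x₀ R w') (hwS : MapsTo w (Icc 0 R) S)
    (hwS' : MapsTo w' (Icc 0 R) S) {ε : ℝ} (hε : 0 < ε)
    (hNN' : ∀ t ∈ Ico 0 R, |N' w' t - N w' t| ≤ ε) :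
    ∀ t ∈ Icc 0 R, |w' t - w t| < ε * exp ((K + 1) * t) := by
  have hB (t : ℝ) : HasDerivAt (fun t ↦ ε * exp ((K + 1) * t))
      ((K + 1) * (ε * exp ((K + 1) * t))) t :=
    (((hasDerivAt_id t).const_mul ((K : ℝ) + 1)).exp.const_mul ε).congr_deriv (by simp; ring)
  refine abs_lt_of_abs_deriv_le (f := fun t ↦ w' t - w t) (hw'.continuous.sub hw.continuous)
    (fun t ht ↦ (hw'.hasDerivWithinAt t ht).sub (hw.hasDerivWithinAt t ht)) hB
    (by simpa [hw.initial, hw'.initial]) fun t ht hpast ↦ ?_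
  set b := ε * exp ((K + 1) * t)
  have hεb : ε ≤ b := le_mul_of_one_le_right hε.le
    (one_le_exp (mul_nonneg (by positivity) ht.1))
  have hLip : |N w' t - N w t| ≤ K * b := by
    have hsub : Icc 0 t ⊆ Icc 0 R := Icc_subset_Icc_right ht.2.le
    refine hN hw'.continuous hw.continuous ⟨ht.1, ht.2.le⟩ (hwS'.mono_left hsub)
      (hwS.mono_left hsub) fun s hs ↦ (hpast s hs).trans ?_
    have := hs.2
    change ε * exp ((K + 1) * s) ≤ ε * exp ((K + 1) * t)
    gcongr
  calc |N' w' t - N w t| ≤ |N' w' t - N w' t| + |N w' t - N w t| := abs_sub_le _ _ _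
    _ ≤ b + K * b := add_le_add ((hNN' t ht).trans hεb) hLip
    _ = (K + 1) * b := by ring

lemma IsCausalLipschitz.tendstoUniformlyOn (hN : IsCausalLipschitz N S R K) {ι : Type*}
    {l : Filter ι} {F : ι → (ℝ → ℝ) → ℝ → ℝ} {W : ι → ℝ → ℝ} {w : ℝ → ℝ}
    (hw : IsCausalSolution N x₀ R w) (hwS : MapsTo w (Icc 0 R) S)
    (hW : ∀ᶠ i in l, IsCausalSolution (F i) x₀ R (W i))
    (hWS : ∀ᶠ i in l, MapsTo (W i) (Icc 0 R) S)
    (hF : ∀ ε > 0, ∀ᶠ i in l, ∀ t ∈ Ico 0 R, |F i (W i) t - N (W i) t| ≤ ε) :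
    TendstoUniformlyOn W w l (Icc 0 R) := by
  rw [Metric.tendstoUniformlyOn_iff]
  intro δ hδ
  filter_upwards [hW, hWS, hF (δ / exp ((K + 1) * R)) (by positivity)] with i hWi hWSi hFi t ht
  rw [dist_comm, dist_eq]
  calc |W i t - w t| < δ / exp ((K + 1) * R) * exp ((K + 1) * t) :=
        hN.abs_sub_lt_mul_exp hw hWi hwS hWSi (by positivity) hFi t ht
    _ ≤ δ / exp ((K + 1) * R) * exp ((K + 1) * R) := by
        have := ht.2
        gcongr
    _ = δ := div_mul_cancel₀ _ (exp_pos _).ne'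

lemma IsLocallyCausalLipschitz.eqOn (hN : IsLocallyCausalLipschitz N) {w w' : ℝ → ℝ}
    (hw : IsCausalSolution N x₀ R w) (hw' : IsCausalSolution N x₀ R w') :
    EqOn w w' (Icc 0 R) := by
  obtain ⟨L, hL⟩ := isCompact_Icc.exists_bound_of_continuousOn hw.continuous.continuousOn
  obtain ⟨L', hL'⟩ := isCompact_Icc.exists_bound_of_continuousOn hw'.continuous.continuousOn
  obtain ⟨K, hK⟩ := hN.exists_isCausalLipschitz (max L L') R
  have hlim : TendstoUniformlyOn (fun _ : ℕ ↦ w') w atTop (Icc 0 R) :=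
    hK.tendstoUniformlyOn (F := fun _ ↦ N) hw
      (fun t ht ↦ abs_le.1 ((hL t ht).trans (le_max_left _ _))) (.of_forall fun _ ↦ hw')
      (.of_forall fun _ t ht ↦ abs_le.1 ((hL' t ht).trans (le_max_right _ _)))
      fun ε hε ↦ .of_forall fun _ t _ ↦ by simpa using hε.le
  exact fun t ht ↦ tendsto_nhds_unique (hlim.tendsto_at ht) tendsto_const_nhds

lemma IsLocallyCausalLipschitz.congr (hN : IsLocallyCausalLipschitz N) {f g : ℝ → ℝ}
    (hf : Continuous f) (hg : Continuous g) {t : ℝ} (ht : 0 ≤ t) (hfg : EqOn f g (Icc 0 t)) :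
    N f t = N g t := by
  obtain ⟨L, hL⟩ := isCompact_Icc.exists_bound_of_continuousOn hf.continuousOn
  obtain ⟨K, hK⟩ := hN.exists_isCausalLipschitz L t
  exact hK.congr hf hg ⟨ht, le_rfl⟩ (fun s hs ↦ abs_le.1 (hL s hs)) hfg

/-! ### Existence -/

lemma abs_integral_le_of_abs_le_exp {h : ℝ → ℝ} {k D t : ℝ} (ht : 0 ≤ t) (hD : 0 ≤ D)
    (hh : ∀ s ∈ Icc 0 t, |h s| ≤ k * (exp (2 * k * s) * D)) :
    |∫ s in 0..t, h s| ≤ exp (2 * k * t) * (D / 2) := by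
  have hprim (s : ℝ) : HasDerivAt (fun s ↦ exp (2 * k * s) * (D / 2))
      (k * (exp (2 * k * s) * D)) s :=
    (((hasDerivAt_id s).const_mul (2 * k)).exp.mul_const (D / 2)).congr_deriv (by simp; ring)
  have hint : IntervalIntegrable (fun s ↦ k * (exp (2 * k * s) * D)) MeasureTheory.volume 0 t :=
    Continuous.intervalIntegrable (by fun_prop) _ _
  calc |∫ s in 0..t, h s| ≤ ∫ s in 0..t, k * (exp (2 * k * s) * D) :=
        norm_eq_abs (∫ s in 0..t, h s) ▸ intervalIntegral.norm_integral_le_of_norm_le ht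
          (.of_forall fun s hs ↦ hh s ⟨hs.1.le, hs.2⟩) hint
    _ = exp (2 * k * t) * (D / 2) - D / 2 := by
        rw [intervalIntegral.integral_eq_sub_of_hasDerivAt (fun s _ ↦ hprim s) hint]
        simp
    _ ≤ exp (2 * k * t) * (D / 2) := by linarith

/-- The function on the real line encoded by `f`: multiplied by the weight `exp (2 K s)` and
extended beyond `[0, R]`. Storing functions with the weight divided out (Bielecki's norm) makes the
Picard map a contraction on an interval of any length. -/
noncomputable def weightedExtend (K : ℝ≥0) (hR : 0 ≤ R) (f : C(Icc 0 R, ℝ)) (s : ℝ) : ℝ :=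
  exp (2 * K * s) * f (projIcc 0 R hR s)

lemma continuous_weightedExtend (hR : 0 ≤ R) (f : C(Icc 0 R, ℝ)) :
    Continuous (weightedExtend K hR f) :=
  Continuous.mul (by fun_prop) (f.continuous.comp continuous_projIcc)

lemma abs_weightedExtend_sub_le (hR : 0 ≤ R) (f g : C(Icc 0 R, ℝ)) (s : ℝ) :
    |weightedExtend K hR f s - weightedExtend K hR g s| ≤ exp (2 * K * s) * dist f g := by
  rw [weightedExtend, weightedExtend, ← mul_sub, abs_mul, abs_of_pos (exp_pos _)]
  gcongr
  exact ContinuousMap.dist_apply_le_dist (f := f) (g := g) _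

/-- The Picard map `f ↦ x₀ + ∫₀ᵗ N f` of the equation `w' = N w`, `w 0 = x₀`, read through
`weightedExtend`. -/
noncomputable def picardMap (hN : ∀ ⦃f⦄, Continuous f → Continuous (N f)) (x₀ : ℝ) (K : ℝ≥0)
    (hR : 0 ≤ R) (f : C(Icc 0 R, ℝ)) : C(Icc 0 R, ℝ) where
  toFun t := exp (-(2 * K * t)) * (x₀ + ∫ s in 0..(t : ℝ), N (weightedExtend K hR f) s)
  continuous_toFun := by
    have hprim := intervalIntegral.continuous_primitive (μ := MeasureTheory.volume)
      (fun a b ↦ (hN (continuous_weightedExtend (K := K) hR f)).intervalIntegrable a b) 0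
    have : Continuous fun t : Icc 0 R ↦ ∫ s in 0..(t : ℝ), N (weightedExtend K hR f) s :=
      hprim.comp continuous_subtype_val
    fun_prop

lemma weightedExtend_picardMap (hN : ∀ ⦃f⦄, Continuous f → Continuous (N f)) (hR : 0 ≤ R)
    (f : C(Icc 0 R, ℝ)) {t : ℝ} (ht : t ∈ Icc 0 R) :
    weightedExtend K hR (picardMap hN x₀ K hR f) t
      = x₀ + ∫ s in 0..t, N (weightedExtend K hR f) s := by
  rw [weightedExtend, projIcc_of_mem hR ht]
  change exp _ * (exp _ * _) = _
  rw [← mul_assoc, ← exp_add, add_neg_cancel, exp_zero, one_mul]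

lemma contractingWith_picardMap (hN : ∀ ⦃f⦄, Continuous f → Continuous (N f))
    (hLip : IsCausalLipschitz N univ R K) (hR : 0 ≤ R) :
    ContractingWith (1 / 2) (picardMap hN x₀ K hR) := by
  refine ⟨NNReal.half_lt_self one_ne_zero, LipschitzWith.of_dist_le_mul fun f g ↦ ?_⟩
  rw [ContinuousMap.dist_le (by positivity)]
  rintro ⟨t, ht⟩
  have hfc := continuous_weightedExtend (K := K) hR f
  have hgc := continuous_weightedExtend (K := K) hR g
  have hint : |∫ s in 0..t, (N (weightedExtend K hR f) s - N (weightedExtend K hR g) s)|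
      ≤ exp (2 * K * t) * (dist f g / 2) := by
    refine abs_integral_le_of_abs_le_exp ht.1 dist_nonneg fun s hs ↦ ?_
    refine hLip hfc hgc ⟨hs.1, hs.2.trans ht.2⟩ (mapsTo_univ _ _) (mapsTo_univ _ _)
      fun x hx ↦ (abs_weightedExtend_sub_le hR f g x).trans ?_
    have := hx.2
    gcongr
  rw [intervalIntegral.integral_sub ((hN hfc).intervalIntegrable _ _)
    ((hN hgc).intervalIntegrable _ _)] at hint
  change |exp (-(2 * K * t)) * (x₀ + _) - exp (-(2 * K * t)) * (x₀ + _)| ≤ _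
  rw [← mul_sub, add_sub_add_left_eq_sub, abs_mul, abs_of_pos (exp_pos _)]
  calc _ ≤ exp (-(2 * K * t)) * (exp (2 * K * t) * (dist f g / 2)) := by gcongr
    _ = dist f g / 2 := by
        rw [← mul_assoc, ← exp_add, neg_add_cancel, exp_zero, one_mul]
    _ = ((1 / 2 : ℝ≥0) : ℝ) * dist f g := by
        push_cast
        ring

lemma IsCausalLipschitz.exists_isCausalSolution (hLip : IsCausalLipschitz N univ R K)
    (hN : ∀ ⦃f⦄, Continuous f → Continuous (N f)) (hR : 0 ≤ R) (x₀ : ℝ) :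
    ∃ w, IsCausalSolution N x₀ R w := by
  have : Nonempty (Icc 0 R) := ⟨0, left_mem_Icc.2 hR⟩
  obtain ⟨f, hf⟩ : ∃ f, picardMap hN x₀ K hR f = f :=
    ⟨_, (contractingWith_picardMap hN hLip hR).fixedPoint_isFixedPt⟩
  set e := weightedExtend K hR f
  have hec : Continuous e := continuous_weightedExtend hR f
  have hderiv (r : ℝ) : HasDerivAt (fun t ↦ x₀ + ∫ s in 0..t, N e s) (N e r) r :=
    ((hN hec).integral_hasStrictDerivAt 0 r).hasDerivAt.const_add x₀
  have hcont : Continuous fun t ↦ x₀ + ∫ s in 0..t, N e s :=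
    continuous_iff_continuousAt.2 fun r ↦ (hderiv r).continuousAt
  have heq : EqOn e (fun t ↦ x₀ + ∫ s in 0..t, N e s) (Icc 0 R) := fun t ht ↦ by
    simpa only [hf] using weightedExtend_picardMap (x₀ := x₀) (K := K) hN hR f ht
  refine ⟨_, hcont, by simp, fun r hr ↦ ?_⟩
  rw [← hLip.congr hec hcont ⟨hr.1, hr.2.le⟩ (mapsTo_univ _ _)
    (heq.mono (Icc_subset_Icc_right hr.2.le))]
  exact (hderiv r).hasDerivWithinAt

lemma IsCausalLipschitz.comp_projIcc {L : ℝ} (hLip : IsCausalLipschitz N (Icc (-L) L) R K)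
    (hL : -L ≤ L) : IsCausalLipschitz (fun f ↦ N fun s ↦ projIcc (-L) L hL (f s)) univ R K :=
  fun _ _ hf hg _ ht _ _ _ hD ↦
    hLip (continuous_subtype_val.comp (continuous_projIcc.comp hf))
      (continuous_subtype_val.comp (continuous_projIcc.comp hg)) ht
      (fun _ _ ↦ Subtype.coe_prop _) (fun _ _ ↦ Subtype.coe_prop _)
      fun s hs ↦ (abs_projIcc_sub_projIcc hL).trans (hD s hs)

lemma IsCausalSolution.of_comp_projIcc (hN : IsLocallyCausalLipschitz N) {L : ℝ} {hL : -L ≤ L}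
    {w : ℝ → ℝ} (hw : IsCausalSolution (fun f ↦ N fun s ↦ projIcc (-L) L hL (f s)) x₀ R w)
    (hle : ∀ t ∈ Ico 0 R, |w t| ≤ L) : IsCausalSolution N x₀ R w where
  continuous := hw.continuous
  initial := hw.initial
  hasDerivWithinAt r hr := by
    have heq : N w r = N (fun s ↦ projIcc (-L) L hL (w s)) r := by
      refine hN.congr hw.continuous
        (continuous_subtype_val.comp (continuous_projIcc.comp hw.continuous)) hr.1 fun s hs ↦ ?_
      exact (congrArg Subtype.val
        (projIcc_of_mem hL (abs_le.1 (hle s ⟨hs.1, hs.2.trans_lt hr.2⟩)))).symm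
    exact heq ▸ hw.hasDerivWithinAt r hr

lemma IsLocallyCausalLipschitz.exists_isCausalSolution (hN : IsLocallyCausalLipschitz N) {κ : ℝ}
    (hκ : 0 ≤ κ) (hbound : ∀ R w, IsCausalSolution N x₀ R w → ∀ t ∈ Ico 0 R, |N w t| ≤ κ)
    (hR : 0 ≤ R) : ∃ w, IsCausalSolution N x₀ R w := by
  set L := |x₀| + κ * R + 1
  have hL : -L ≤ L := neg_le_self (by positivity)
  obtain ⟨K, hK⟩ := hN.exists_isCausalLipschitz L R
  obtain ⟨w, hw⟩ := (hK.comp_projIcc hL).exists_isCausalSolution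
    (fun f hf ↦ hN.continuous (continuous_subtype_val.comp (continuous_projIcc.comp hf))) hR x₀
  have hlt : ∀ t ∈ Icc 0 R, |w t| < L := by
    refine forall_lt_of_forall_lt_before hw.continuous.abs fun t ht hbefore ↦ ?_
    have hwt : IsCausalSolution N x₀ t w :=
      (hw.mono ht.2).of_comp_projIcc hN fun s hs ↦ (hbefore s hs).le
    calc |w t| ≤ |x₀| + κ * t := hwt.abs_le_add_mul (hbound t w hwt) t ⟨ht.1, le_rfl⟩
      _ ≤ |x₀| + κ * R := by
          have := ht.2
          gcongr
      _ < L := lt_add_one _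
  exact ⟨w, hw.of_comp_projIcc hN fun t ht ↦ (hlt t ⟨ht.1, ht.2.le⟩).le⟩

lemma IsLocallyCausalLipschitz.exists_forall_isCausalSolution (hN : IsLocallyCausalLipschitz N)
    (hex : ∀ R, 0 ≤ R → ∃ w, IsCausalSolution N x₀ R w) :
    ∃ w, ∀ R, IsCausalSolution N x₀ R w := by
  choose W hW using fun k : ℕ ↦ hex k k.cast_nonneg
  let w : ℝ → ℝ := fun r ↦ W ⌈r⌉₊ (max r 0)
  have hwW {k : ℕ} {r : ℝ} (hr : r ≤ k) : w r = W k (max r 0) :=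
    hN.eqOn (hW ⌈r⌉₊) ((hW k).mono (by exact_mod_cast Nat.ceil_le.2 hr))
      ⟨le_max_right _ _, max_le (Nat.le_ceil r) (Nat.cast_nonneg _)⟩
  have hwW_nonneg {k : ℕ} {r : ℝ} (h₀ : 0 ≤ r) (hr : r ≤ k) : w r = W k r := by
    rw [hwW hr, max_eq_left h₀]
  have hcont : Continuous w := continuous_iff_continuousAt.2 fun r ↦ by
    obtain ⟨k, hk⟩ := exists_nat_gt r
    refine ContinuousAt.congr (f := fun r ↦ W k (max r 0))
      ((hW k).continuous.comp (continuous_id.max continuous_const)).continuousAt ?_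
    filter_upwards [gt_mem_nhds hk] with t ht using (hwW ht.le).symm
  refine ⟨w, fun R ↦ ⟨hcont, ?_, fun r hr ↦ ?_⟩⟩
  · rw [hwW_nonneg (k := 0) le_rfl (by simp), (hW 0).initial]
  · obtain ⟨k, hk⟩ := exists_nat_gt r
    have heq : N w r = N (W k) r := hN.congr hcont (hW k).continuous hr.1 fun s hs ↦
      hwW_nonneg hs.1 (hs.2.trans hk.le)
    rw [heq]
    refine ((hW k).hasDerivWithinAt r ⟨hr.1, hk⟩).congr_of_eventuallyEq ?_
      (hwW_nonneg hr.1 hk.le)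
    filter_upwards [self_mem_nhdsWithin, mem_nhdsWithin_of_mem_nhds (gt_mem_nhds hk)]
      with t ht htk using hwW_nonneg ht (le_of_lt htk)

end CausalEquation

section RadialOperators

/-! ### The radial operators -/

/-- The average over the ball of radius `t` in `ℝⁿ` of the radial function with profile `h`. -/
noncomputable def radialMean (n : ℕ) (h : ℝ → ℝ) (t : ℝ) : ℝ :=
  n * ∫ σ in 0..1, σ ^ (n - 1) * h (t * σ)

/-- The operator `G` for which the profile `h` of a radial solution of
`(n - 1) Δ Φ + α h + β x · ∇ h = 0` satisfies `Φ' = r G h`: this is the equation integrated over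
the ball of radius `r`. -/
noncomputable def radialForcing (n : ℕ) (α β : ℝ) (h : ℝ → ℝ) (t : ℝ) : ℝ :=
  -(1 / (n - 1)) * (β * h t + (α / n - β) * radialMean n h t)

/-- A bound for the norm of `radialForcing n α β` with respect to the sup norm. -/
noncomputable def radialForcingBound (n : ℕ) (α β : ℝ) : ℝ :=
  |1 / ((n : ℝ) - 1)| * (|β| + |α / n - β|)

/-- The right-hand side of the equation `w' = N w` for `w = log v`, where `v` is a radial solution
in the sense of `IsRadialSol`. For `m = 0` it is the right-hand side belonging to the limit
equation. -/
noncomputable def radialVelocity (n : ℕ) (α β m : ℝ) (w : ℝ → ℝ) (t : ℝ) : ℝ :=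
  exp (-(m * w t)) * (t * radialForcing n α β (fun s ↦ exp (w s)) t)

variable {n : ℕ} {α β m : ℝ} {g h w : ℝ → ℝ} {C D L M r t : ℝ}

lemma continuous_radialMean (hh : Continuous h) : Continuous (radialMean n h) :=
  .const_mul
    (intervalIntegral.continuous_parametric_intervalIntegral_of_continuous' (by fun_prop) 0 1) _

lemma radialMean_const (hn : n ≠ 0) (c t : ℝ) : radialMean n (fun _ ↦ c) t = c := by
  have : (n : ℝ) ≠ 0 := Nat.cast_ne_zero.2 hn
  rw [radialMean, intervalIntegral.integral_mul_const, integral_pow,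
    Nat.sub_add_cancel (Nat.one_le_iff_ne_zero.2 hn)]
  simp [Nat.cast_pred (Nat.pos_of_ne_zero hn), hn]

lemma radialMean_zero (hn : n ≠ 0) (h : ℝ → ℝ) : radialMean n h 0 = h 0 := by
  simpa [radialMean] using radialMean_const hn (h 0) 0

lemma radialMean_sub (hh : Continuous h) (hg : Continuous g) (t : ℝ) :
    radialMean n (fun s ↦ h s - g s) t = radialMean n h t - radialMean n g t := by
  simp_rw [radialMean, mul_sub]
  rw [intervalIntegral.integral_sub (Continuous.intervalIntegrable (by fun_prop) _ _)
    (Continuous.intervalIntegrable (by fun_prop) _ _), mul_sub]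

lemma abs_radialMean_le (hn : n ≠ 0) (ht : 0 ≤ t) (hh : ∀ s ∈ Icc 0 t, |h s| ≤ C) :
    |radialMean n h t| ≤ C := by
  have hint : |∫ σ in 0..1, σ ^ (n - 1) * h (t * σ)| ≤ ∫ σ in 0..1, σ ^ (n - 1) * C := by
    rw [← norm_eq_abs]
    refine intervalIntegral.norm_integral_le_of_norm_le zero_le_one (.of_forall fun σ hσ ↦ ?_)
      (Continuous.intervalIntegrable (by fun_prop) _ _)
    rw [norm_mul, norm_of_nonneg (pow_nonneg hσ.1.le _)]
    exact mul_le_mul_of_nonneg_left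
      (hh _ ⟨mul_nonneg ht hσ.1.le, mul_le_of_le_one_right ht hσ.2⟩) (pow_nonneg hσ.1.le _)
  calc |radialMean n h t| ≤ n * ∫ σ in 0..1, σ ^ (n - 1) * C := by
        rw [radialMean, abs_mul, Nat.abs_cast]
        gcongr
    _ = C := radialMean_const hn C 0

lemma pow_mul_radialMean (hn : n ≠ 0) (h : ℝ → ℝ) (t : ℝ) :
    t ^ n * radialMean n h t = n * ∫ s in 0..t, s ^ (n - 1) * h s := by
  have hsubst := intervalIntegral.mul_integral_comp_mul_left (a := 0) (b := 1)
    (f := fun s ↦ s ^ (n - 1) * h s) t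
  rw [mul_zero, mul_one] at hsubst
  simp_rw [← hsubst, mul_pow, mul_assoc]
  rw [radialMean, intervalIntegral.integral_const_mul, ← mul_pow_sub_one hn t]
  ring

lemma hasDerivAt_radialMean (hn : n ≠ 0) (hh : Continuous h) (hr : 0 < r) :
    HasDerivAt (radialMean n h) (n * (h r - radialMean n h r) / r) r := by
  have hint : HasDerivAt (fun t ↦ n * ∫ s in 0..t, s ^ (n - 1) * h s)
      (n * (r ^ (n - 1) * h r)) r :=
    (((by fun_prop : Continuous fun s ↦ s ^ (n - 1) * h s).integral_hasStrictDerivAt 0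
      r).hasDerivAt).const_mul _
  refine ((hint.div (hasDerivAt_pow n r) (pow_ne_zero n hr.ne')).congr_deriv ?_)
    |>.congr_of_eventuallyEq ?_
  · rw [← pow_mul_radialMean hn, ← mul_pow_sub_one hn r]
    have := hr.ne'
    field_simp
  · filter_upwards [lt_mem_nhds hr] with t ht
    rw [Pi.div_apply, ← pow_mul_radialMean hn, mul_div_cancel_left₀ _ (pow_ne_zero n ht.ne')]

lemma continuous_radialForcing (hh : Continuous h) : Continuous (radialForcing n α β h) := by
  have := continuous_radialMean (n := n) hh
  unfold radialForcing
  fun_prop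

lemma radialForcing_zero (hn : n ≠ 0) (h : ℝ → ℝ) :
    radialForcing n α β h 0 = -(1 / (n - 1)) * (α / n * h 0) := by
  rw [radialForcing, radialMean_zero hn]
  ring

lemma radialForcing_const (hn : n ≠ 0) (c t : ℝ) : radialForcing n 0 β (fun _ ↦ c) t = 0 := by
  rw [radialForcing, radialMean_const hn]
  ring

lemma radialForcing_sub (hh : Continuous h) (hg : Continuous g) (t : ℝ) :
    radialForcing n α β (fun s ↦ h s - g s) t
      = radialForcing n α β h t - radialForcing n α β g t := by
  simp only [radialForcing, radialMean_sub hh hg]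
  ring

lemma radialForcingBound_nonneg : 0 ≤ radialForcingBound n α β := by
  unfold radialForcingBound
  positivity

lemma abs_radialForcing_le (hn : n ≠ 0) (ht : 0 ≤ t) (hh : ∀ s ∈ Icc 0 t, |h s| ≤ C) :
    |radialForcing n α β h t| ≤ radialForcingBound n α β * C := by
  have ht' := hh t ⟨ht, le_rfl⟩
  have hmean := abs_radialMean_le hn ht hh
  rw [radialForcing, radialForcingBound, abs_mul, abs_neg, mul_assoc]
  gcongr
  calc |β * h t + (α / n - β) * radialMean n h t|
      ≤ |β| * |h t| + |α / n - β| * |radialMean n h t| :=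
        (abs_add_le _ _).trans_eq (by simp only [abs_mul])
    _ ≤ |β| * C + |α / n - β| * C := by gcongr
    _ = (|β| + |α / n - β|) * C := by ring

lemma hasDerivAt_radialForcing (hn : n ≠ 0) (hh : Continuous h) (hr : 0 < r) {h' : ℝ}
    (hd : HasDerivAt h h' r) :
    HasDerivAt (radialForcing n α β h)
      ((-((α * h r + β * r * h') / (n - 1)) - n * radialForcing n α β h r) / r) r := by
  refine ((hd.const_mul β).add ((hasDerivAt_radialMean hn hh hr).const_mul (α / n - β))
    |>.const_mul (-(1 / ((n : ℝ) - 1)))).congr_deriv ?_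
  have := hr.ne'
  have : (n : ℝ) ≠ 0 := Nat.cast_ne_zero.2 hn
  rw [radialForcing]
  field_simp
  ring

lemma hasDerivAt_mul_radialForcing (hn : n ≠ 0) (hh : Continuous h) (hr : 0 < r) {h' : ℝ}
    (hd : HasDerivAt h h' r) :
    HasDerivAt (fun t ↦ t * radialForcing n α β h t)
      (-((α * h r + β * r * h') / (n - 1)) - (n - 1) * radialForcing n α β h r) r := by
  refine ((hasDerivAt_id r).mul (hasDerivAt_radialForcing hn hh hr hd)).congr_deriv ?_
  rw [id, mul_div_cancel₀ _ hr.ne']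
  ring

lemma abs_exp_sub_exp_le {a b : ℝ} (ha : a ≤ L) (hb : b ≤ L) :
    |exp a - exp b| ≤ exp L * |a - b| :=
  (convex_Iic L).norm_image_sub_le_of_norm_deriv_le (fun _ _ ↦ differentiableAt_exp)
    (fun x hx ↦ by simpa using hx) hb ha

lemma continuous_radialVelocity (hw : Continuous w) : Continuous (radialVelocity n α β m w) := by
  have := continuous_radialForcing (n := n) (α := α) (β := β) (h := fun s ↦ exp (w s)) (by fun_prop)
  unfold radialVelocity
  fun_prop

lemma neg_mul_le_mul_of_abs_le (hm : |m| ≤ M) {x : ℝ} (hx : |x| ≤ L) : -(m * x) ≤ M * L :=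
  calc -(m * x) ≤ |m| * |x| := abs_mul m x ▸ neg_le_abs _
    _ ≤ M * L := mul_le_mul hm hx (abs_nonneg x) ((abs_nonneg m).trans hm)

lemma abs_radialForcing_exp_le (hn : n ≠ 0) (ht : 0 ≤ t) (hw : ∀ s ∈ Icc 0 t, |w s| ≤ L) :
    |radialForcing n α β (fun s ↦ exp (w s)) t| ≤ radialForcingBound n α β * exp L :=
  abs_radialForcing_le hn ht fun s hs ↦ by
    simpa using (le_abs_self _).trans (hw s hs)

lemma abs_radialForcing_exp_sub_le (hn : n ≠ 0) (hg : Continuous g) (hw : Continuous w)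
    (ht : 0 ≤ t) (hgL : ∀ s ∈ Icc 0 t, |g s| ≤ L) (hwL : ∀ s ∈ Icc 0 t, |w s| ≤ L)
    (hD : ∀ s ∈ Icc 0 t, |g s - w s| ≤ D) :
    |radialForcing n α β (fun s ↦ exp (g s)) t - radialForcing n α β (fun s ↦ exp (w s)) t|
      ≤ radialForcingBound n α β * (exp L * D) := by
  rw [← radialForcing_sub (by fun_prop) (by fun_prop)]
  refine abs_radialForcing_le hn ht fun s hs ↦ ?_
  calc |exp (g s) - exp (w s)| ≤ exp L * |g s - w s| :=
        abs_exp_sub_exp_le ((le_abs_self _).trans (hgL s hs)) ((le_abs_self _).trans (hwL s hs))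
    _ ≤ exp L * D := by
        gcongr
        exact hD s hs

lemma abs_radialVelocity_le (hn : n ≠ 0) (hm : |m| ≤ M) (ht : 0 ≤ t)
    (hw : ∀ s ∈ Icc 0 t, |w s| ≤ L) :
    |radialVelocity n α β m w t|
      ≤ exp (M * L) * (t * (radialForcingBound n α β * exp L)) := by
  rw [radialVelocity, abs_mul, abs_mul, abs_of_pos (exp_pos _), abs_of_nonneg ht]
  gcongr
  · exact neg_mul_le_mul_of_abs_le hm (hw t ⟨ht, le_rfl⟩)
  · exact abs_radialForcing_exp_le hn ht hw

lemma abs_radialVelocity_sub_le (hn : n ≠ 0) (hg : Continuous g) (hw : Continuous w) {m' : ℝ}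
    (hm : |m| ≤ M) (hm' : |m'| ≤ M) (ht : 0 ≤ t) (hgL : ∀ s ∈ Icc 0 t, |g s| ≤ L)
    (hwL : ∀ s ∈ Icc 0 t, |w s| ≤ L) (hD : ∀ s ∈ Icc 0 t, |g s - w s| ≤ D) :
    |radialVelocity n α β m g t - radialVelocity n α β m' w t|
      ≤ exp (M * L) * (t * (radialForcingBound n α β * exp L))
        * ((1 + M) * D + L * |m - m'|) := by
  have hmem : t ∈ Icc 0 t := ⟨ht, le_rfl⟩
  have hexp : |exp (-(m * g t)) - exp (-(m' * w t))| ≤ exp (M * L) * (M * D + L * |m - m'|) := by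
    refine (abs_exp_sub_exp_le (neg_mul_le_mul_of_abs_le hm (hgL t hmem))
      (neg_mul_le_mul_of_abs_le hm' (hwL t hmem))).trans ?_
    gcongr
    calc |-(m * g t) - -(m' * w t)| = |-(m * (g t - w t)) + -(w t * (m - m'))| := by ring_nf
      _ ≤ |m| * |g t - w t| + |w t| * |m - m'| := by
          simpa only [abs_neg, abs_mul] using abs_add_le (-(m * (g t - w t))) (-(w t * (m - m')))
      _ ≤ M * D + L * |m - m'| := by
          have hM := (abs_nonneg m).trans hm
          gcongr
          exacts [hD t hmem, hwL t hmem]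
  set G := radialForcing n α β (fun s ↦ exp (g s)) t
  set W := radialForcing n α β (fun s ↦ exp (w s)) t
  have hGW : |G - W| ≤ radialForcingBound n α β * (exp L * D) :=
    abs_radialForcing_exp_sub_le hn hg hw ht hgL hwL hD
  have hW : |W| ≤ radialForcingBound n α β * exp L := abs_radialForcing_exp_le hn ht hwL
  calc |exp (-(m * g t)) * (t * G) - exp (-(m' * w t)) * (t * W)|
      = |exp (-(m * g t)) * (t * (G - W))
          + (exp (-(m * g t)) - exp (-(m' * w t))) * (t * W)| := by ring_nf
    _ ≤ exp (-(m * g t)) * (t * |G - W|)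
          + |exp (-(m * g t)) - exp (-(m' * w t))| * (t * |W|) := by
        refine (abs_add_le _ _).trans_eq ?_
        simp only [abs_mul, abs_of_nonneg ht, abs_exp]
    _ ≤ exp (M * L) * (t * (radialForcingBound n α β * (exp L * D)))
          + exp (M * L) * (M * D + L * |m - m'|)
            * (t * (radialForcingBound n α β * exp L)) := by
        have := neg_mul_le_mul_of_abs_le hm (hgL t hmem)
        have := (abs_nonneg _).trans hexp
        gcongr
    _ = _ := by ring

lemma isLocallyCausalLipschitz_radialVelocity (hn : n ≠ 0) :
    IsLocallyCausalLipschitz (radialVelocity n α β m) where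
  continuous _ hf := continuous_radialVelocity hf
  exists_isCausalLipschitz L R := by
    refine ⟨(exp (|m| * L) * (R * (radialForcingBound n α β * exp L)) * (1 + |m|)).toNNReal,
      fun f g hf hg t ht hfL hgL D hD ↦ ?_⟩
    have hD₀ : 0 ≤ D := (abs_nonneg _).trans (hD t ⟨ht.1, le_rfl⟩)
    have hdiff := abs_radialVelocity_sub_le (α := α) (β := β) hn hf hg (le_refl |m|) le_rfl ht.1
      (fun s hs ↦ abs_le.2 (hfL hs)) (fun s hs ↦ abs_le.2 (hgL hs)) hD
    calc |radialVelocity n α β m f t - radialVelocity n α β m g t|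
        ≤ exp (|m| * L) * (t * (radialForcingBound n α β * exp L)) * (1 + |m|) * D := by
          simpa [← mul_assoc] using hdiff
      _ ≤ exp (|m| * L) * (R * (radialForcingBound n α β * exp L)) * (1 + |m|) * D := by
          have := radialForcingBound_nonneg (n := n) (α := α) (β := β)
          have := ht.2
          gcongr
      _ ≤ _ := mul_le_mul_of_nonneg_right (le_coe_toNNReal _) hD₀

end RadialOperators

section APrioriBound

open scoped Topology

/-! ### The a priori bound and global existence -/

variable {n : ℕ} {α β m x₀ R r : ℝ} {w : ℝ → ℝ}

lemma IsCausalSolution.hasDerivAt_exp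
    (hw : IsCausalSolution (radialVelocity n α β m) x₀ R w) (hr : r ∈ Ioo 0 R) :
    HasDerivAt (fun s ↦ exp (w s)) (exp (w r) * radialVelocity n α β m w r) r :=
  (hw.hasDerivAt hr).exp

lemma IsCausalSolution.mul_radialForcing_nonpos (hn : 1 < n)
    (hw : IsCausalSolution (radialVelocity n α β m) x₀ R w) :
    ∀ r ∈ Ioo 0 R, α * radialForcing n α β (fun s ↦ exp (w s)) r ≤ 0 := by
  rcases eq_or_ne α 0 with rfl | hα
  · simp
  have hn₀ : n ≠ 0 := by omega
  have hn₁ : (0 : ℝ) < n - 1 := sub_pos.2 (Nat.one_lt_cast.2 hn)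
  have hcont : Continuous fun s ↦ exp (w s) := hw.continuous.rexp
  refine le_of_deriv_neg_of_eq ((continuous_radialForcing hcont).const_mul α) ?_
    (fun r hr ↦ (hasDerivAt_radialForcing hn₀ hcont hr.1 (hw.hasDerivAt_exp hr)).const_mul α)
    fun r hr hzero ↦ ?_
  · have : α * radialForcing n α β (fun s ↦ exp (w s)) 0
        = -(α ^ 2 * exp (w 0) / (n * (n - 1))) := by
      rw [radialForcing_zero hn₀]
      field_simp
    rw [this, neg_lt_zero]
    positivity
  · have hr₀ := hr.1
    have hforcing : radialForcing n α β (fun s ↦ exp (w s)) r = 0 :=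
      (mul_eq_zero.1 hzero).resolve_left hα
    calc _ = -(α ^ 2 * exp (w r) / ((n - 1) * r)) := by
          rw [radialVelocity, hforcing]
          field_simp
          ring
      _ < 0 := neg_lt_zero.2 (by positivity)

lemma IsCausalSolution.hasDerivAt_mul_radialVelocity (hn : n ≠ 0)
    (hw : IsCausalSolution (radialVelocity n α β m) x₀ R w) (hr : r ∈ Ioo 0 R) :
    HasDerivAt (fun t ↦ t * radialVelocity n α β m w t)
      (-((n - 2) * radialVelocity n α β m w r + m * r * radialVelocity n α β m w r ^ 2
        + r * exp (-(m * w r)) * exp (w r) * (α + β * (r * radialVelocity n α β m w r))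
          / (n - 1))) r := by
  refine ((hasDerivAt_id r).mul (((hw.hasDerivAt hr).const_mul m).neg.exp.mul
    (hasDerivAt_mul_radialForcing hn hw.continuous.rexp hr.1
      (hw.hasDerivAt_exp hr)))).congr_deriv ?_
  simp only [id, radialVelocity, Pi.mul_apply, Pi.neg_apply]
  ring

lemma IsCausalSolution.neg_mul_radialVelocity_le (hn : n ≠ 0) (hα : α ≠ 0) (hβ : 0 < β)
    (hm : m * α < (n - 2) * β) (hw : IsCausalSolution (radialVelocity n α β m) x₀ R w) :
    ∀ r ∈ Ioo 0 R, -(β * α) * (r * radialVelocity n α β m w r) ≤ α ^ 2 := by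
  refine le_of_deriv_neg_of_eq
    (((continuous_id.mul (continuous_radialVelocity hw.continuous))).const_mul _) ?_
    (fun r hr ↦ (hw.hasDerivAt_mul_radialVelocity hn hr).const_mul _) fun r hr htouch ↦ ?_
  · simpa using pow_pos (abs_pos.2 hα) 2
  · have hr₀ := hr.1
    have hq : α + β * (r * radialVelocity n α β m w r) = 0 := by
      refine (mul_eq_zero.1 ?_).resolve_left hα
      linear_combination -htouch
    have hvel : radialVelocity n α β m w r = -α / (β * r) := by
      field_simp
      linarith
    rw [hq, hvel]
    calc _ = -(α ^ 2 * ((n - 2) * β - m * α) / (β * r)) := by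
          field_simp
          ring
      _ < 0 := by
          have := sub_pos.2 hm
          rw [neg_lt_zero]
          positivity

lemma isCausalSolution_radialVelocity_zero (hn : n ≠ 0) (β m x₀ R : ℝ) :
    IsCausalSolution (radialVelocity n 0 β m) x₀ R fun _ ↦ x₀ where
  continuous := continuous_const
  initial := rfl
  hasDerivWithinAt r _ := by
    simpa [radialVelocity, radialForcing_const hn] using hasDerivWithinAt_const r (Ici 0) x₀

/-- The condition on `m` under which the radial solutions are shown to be global. For `m > 0` the
second alternative is the classical existence condition `α < (n - 2) β / m`, written so as to make
sense for `m = 0`; if `α = 0`, the solutions are constant. -/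
def IsAdmissibleExponent (n : ℕ) (α β m : ℝ) : Prop :=
  α = 0 ∨ 0 < β ∧ m * α < (n - 2) * β

lemma eventually_isAdmissibleExponent (hn : 2 < n) (hαβ : 0 < β ∨ α = 0) :
    ∀ᶠ m in 𝓝 0, IsAdmissibleExponent n α β m := by
  rcases hαβ with hβ | hα
  · have hpos : 0 * α < (n - 2) * β := by
      rw [zero_mul]
      exact mul_pos (sub_pos.2 (by exact_mod_cast hn)) hβ
    have : ∀ᶠ m : ℝ in 𝓝 0, m * α < (n - 2) * β :=
      (continuous_mul_const α).continuousAt.eventually_lt_const hpos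
    filter_upwards [this] with m hm using Or.inr ⟨hβ, hm⟩
  · exact .of_forall fun m ↦ Or.inl hα

lemma IsCausalSolution.mul_abs_radialVelocity_le (hn : 1 < n)
    (hm : IsAdmissibleExponent n α β m)
    (hw : IsCausalSolution (radialVelocity n α β m) x₀ R w) (hr : r ∈ Ioo 0 R) :
    r * |radialVelocity n α β m w r| ≤ |α| / β := by
  have hn₀ : n ≠ 0 := by omega
  have hr₀ := hr.1
  rcases eq_or_ne α 0 with rfl | hα
  · have hN := isLocallyCausalLipschitz_radialVelocity (n := n) (α := 0) (β := β) (m := m) hn₀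
    have hconst := isCausalSolution_radialVelocity_zero hn₀ β m x₀ R
    rw [hN.congr hw.continuous hconst.continuous hr₀.le
      ((hN.eqOn hw hconst).mono (Icc_subset_Icc_right hr.2.le))]
    simp [radialVelocity, radialForcing_const hn₀]
  obtain ⟨hβ, hm⟩ := hm.resolve_left hα
  set q := r * radialVelocity n α β m w r
  have hupper : α * q ≤ 0 := by
    have heq : α * q = r ^ 2 * exp (-(m * w r))
        * (α * radialForcing n α β (fun s ↦ exp (w s)) r) := by
      simp only [q, radialVelocity]
      ring
    exact heq ▸ mul_nonpos_of_nonneg_of_nonpos (by positivity)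
      (hw.mul_radialForcing_nonpos hn r hr)
  have hlower : -(β * α) * q ≤ α ^ 2 := hw.neg_mul_radialVelocity_le hn₀ hα hβ hm r hr
  have hq : r * |radialVelocity n α β m w r| = |q| := by rw [abs_mul, abs_of_pos hr₀]
  rw [hq, le_div_iff₀ hβ]
  refine le_of_mul_le_mul_left ?_ (abs_pos.2 hα)
  calc |α| * (|q| * β) = -(β * α) * q := by
        rw [← mul_assoc, ← abs_mul, abs_of_nonpos hupper]
        ring
    _ ≤ |α| * |α| := by rwa [abs_mul_abs_self, ← sq]

lemma exists_abs_radialVelocity_le_of_abs_sub_le (hn : n ≠ 0) (α β x₀ : ℝ) :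
    ∃ C ≥ 0, ∀ m, |m| ≤ 1 → ∀ w, ∀ t ∈ Icc 0 1, (∀ s ∈ Icc 0 t, |w s - x₀| ≤ 1) →
      |radialVelocity n α β m w t| ≤ C := by
  have hA := radialForcingBound_nonneg (n := n) (α := α) (β := β)
  refine ⟨exp (1 * (|x₀| + 1)) * (1 * (radialForcingBound n α β * exp (|x₀| + 1))),
    by positivity, fun m hm w t ht hw ↦ ?_⟩
  refine (abs_radialVelocity_le (L := |x₀| + 1) hn hm ht.1 fun s hs ↦ ?_).trans ?_
  · linarith [hw s hs, abs_sub_abs_le_abs_sub (w s) x₀]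
  · have := ht.2
    gcongr

lemma exists_abs_radialVelocity_le_near_zero (hn : n ≠ 0) (α β x₀ : ℝ) :
    ∃ ρ > 0, ∃ C ≥ 0, ∀ m, |m| ≤ 1 → ∀ R w, IsCausalSolution (radialVelocity n α β m) x₀ R w →
      ∀ t ∈ Ico 0 R, t ≤ ρ → |radialVelocity n α β m w t| ≤ C := by
  obtain ⟨C, hC, hvel⟩ := exists_abs_radialVelocity_le_of_abs_sub_le hn α β x₀
  have hρ₁ : 1 / (C + 1) ≤ 1 := (div_le_one (by positivity)).2 (by linarith)
  have hB {s : ℝ} (hs : s ≤ 1 / (C + 1)) : 1 / (C + 1) + C * s ≤ 1 :=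
    calc 1 / (C + 1) + C * s ≤ 1 / (C + 1) + C * (1 / (C + 1)) := by gcongr
      _ = 1 := by
          field_simp
          ring
  refine ⟨1 / (C + 1), by positivity, C, hC, fun m hm R w hw t ht htρ ↦ ?_⟩
  have hlt : ∀ s ∈ Icc 0 t, |w s - x₀| < 1 / (C + 1) + C * s :=
    abs_lt_of_abs_deriv_le (hw.continuous.sub continuous_const)
      (fun s hs ↦ (hw.hasDerivWithinAt s ⟨hs.1, hs.2.trans ht.2⟩).sub_const x₀)
      (fun s ↦ ((hasDerivAt_id s).const_mul C).const_add _)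
      (by simp only [hw.initial, sub_self, abs_zero, mul_zero, add_zero]; positivity)
      fun s hs hpast ↦ by
        have hsρ : s ≤ 1 / (C + 1) := hs.2.le.trans htρ
        rw [mul_one]
        exact hvel m hm w s ⟨hs.1, hsρ.trans hρ₁⟩ fun x hx ↦
          (hpast x hx).trans (hB (hx.2.trans hsρ))
  exact hvel m hm w t ⟨ht.1, htρ.trans hρ₁⟩ fun s hs ↦
    (hlt s hs).le.trans (hB (hs.2.trans htρ))

lemma exists_abs_radialVelocity_le (hn : 1 < n) (α β x₀ : ℝ) :
    ∃ κ ≥ 0, ∀ m, |m| ≤ 1 → IsAdmissibleExponent n α β m → ∀ R w,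
      IsCausalSolution (radialVelocity n α β m) x₀ R w →
        ∀ t ∈ Ico 0 R, |radialVelocity n α β m w t| ≤ κ := by
  obtain ⟨ρ, hρ, C, hC, hnear⟩ := exists_abs_radialVelocity_le_near_zero (n := n) (by omega) α β x₀
  refine ⟨max C (|α| / β / ρ), hC.trans (le_max_left _ _), fun m hm hadm R w hw t ht ↦ ?_⟩
  rcases le_or_gt t ρ with htρ | hρt
  · exact (hnear m hm R w hw t ht htρ).trans (le_max_left _ _)
  · refine le_max_of_le_right ((le_div_iff₀' hρ).2 ?_)
    calc ρ * |radialVelocity n α β m w t| ≤ t * |radialVelocity n α β m w t| := by gcongr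
      _ ≤ |α| / β := hw.mul_abs_radialVelocity_le hn hadm ⟨hρ.trans hρt, ht.2⟩

lemma exists_forall_isCausalSolution_radialVelocity (hn : 1 < n) (hm : |m| ≤ 1)
    (hadm : IsAdmissibleExponent n α β m) (x₀ : ℝ) :
    ∃ w, ∀ R, IsCausalSolution (radialVelocity n α β m) x₀ R w := by
  obtain ⟨κ, hκ, hbound⟩ := exists_abs_radialVelocity_le hn α β x₀
  have hN := isLocallyCausalLipschitz_radialVelocity (n := n) (α := α) (β := β) (m := m)
    (by omega)
  exact hN.exists_forall_isCausalSolution fun R hR ↦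
    hN.exists_isCausalSolution hκ (hbound m hm hadm) hR

end APrioriBound

section LogarithmicProfile

open scoped Topology

/-! ### Radial solutions and their logarithms -/

/-- `u` is a radial solution of the limit equation `(n - 1) Δ log u + α u + β x · ∇u = 0` on `ℝⁿ`
with `u 0 = η`; the analogue of `IsRadialSol` for `m = 0`. -/
structure IsLimitRadialSol (n : ℕ) (α β η : ℝ) (u : ℝ → ℝ) : Prop where
  pos : ∀ r ∈ Ici (0 : ℝ), 0 < u r
  continuousOn : ContinuousOn u (Ici 0)
  contDiffOn : ContDiffOn ℝ 2 u (Ioi 0)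
  initial : u 0 = η
  hasDerivWithinAt_zero : HasDerivWithinAt u 0 (Ici 0) 0
  equation : ∀ r ∈ Ioi (0 : ℝ),
    ((n : ℝ) - 1) * (deriv (deriv fun s ↦ log (u s)) r
      + (((n : ℝ) - 1) / r) * deriv (fun s ↦ log (u s)) r) + α * u r + β * r * deriv u r = 0

variable {n : ℕ} {α β η m x₀ r : ℝ} {h v w : ℝ → ℝ}

lemma contDiffOn_two_of_hasDerivAt {s : Set ℝ} (hs : IsOpen s) {f f' f'' : ℝ → ℝ}
    (hf : ∀ x ∈ s, HasDerivAt f (f' x) x) (hf' : ∀ x ∈ s, HasDerivAt f' (f'' x) x)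
    (hf'' : ContinuousOn f'' s) : ContDiffOn ℝ 2 f s := by
  have hsucc {k : ℕ} {f f' : ℝ → ℝ} (hf : ∀ x ∈ s, HasDerivAt f (f' x) x)
      (hf' : ContDiffOn ℝ k f' s) : ContDiffOn ℝ (k + 1) f s :=
    (contDiffOn_succ_iff_deriv_of_isOpen hs).2
      ⟨fun x hx ↦ (hf x hx).differentiableAt.differentiableWithinAt, by simp,
        hf'.congr fun x hx ↦ (hf x hx).deriv⟩
  have h₁ : ContDiffOn ℝ (1 : ℕ) f' s := by
    simpa using hsucc (k := 0) hf' (by simpa using hf'')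
  simpa [one_add_one_eq_two] using hsucc hf h₁

lemma radial_equation_of_hasDerivAt (hn : 1 < n) (hh : Continuous h)
    (hh' : DifferentiableAt ℝ h r) {Φ : ℝ → ℝ} {a : ℝ}
    (hΦ : ∀ r > 0, HasDerivAt Φ (a * (r * radialForcing n α β h r)) r) (hr : 0 < r) :
    ((n : ℝ) - 1) * (deriv (deriv Φ) r + (((n : ℝ) - 1) / r) * deriv Φ r)
      = -a * (α * h r + β * r * deriv h r) := by
  have hderiv : deriv Φ =ᶠ[𝓝 r] fun t ↦ a * (t * radialForcing n α β h t) := by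
    filter_upwards [lt_mem_nhds hr] with t ht using (hΦ t ht).deriv
  rw [hderiv.deriv_eq, hderiv.eq_of_nhds, ((hasDerivAt_mul_radialForcing (by omega) hh hr
    hh'.hasDerivAt).const_mul a).deriv]
  have : (n : ℝ) - 1 ≠ 0 := sub_ne_zero.2 (by exact_mod_cast hn.ne')
  field_simp
  ring

lemma IsCausalSolution.hasDerivAt_of_forall
    (hw : ∀ R, IsCausalSolution (radialVelocity n α β m) x₀ R w) (hr : 0 < r) :
    HasDerivAt w (radialVelocity n α β m w r) r :=
  (hw (r + 1)).hasDerivAt ⟨hr, lt_add_one r⟩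

lemma IsCausalSolution.contDiffOn_two (hn : n ≠ 0)
    (hw : ∀ R, IsCausalSolution (radialVelocity n α β m) x₀ R w) :
    ContDiffOn ℝ 2 w (Ioi 0) := by
  have hcont := (hw 0).continuous
  have hvel := continuous_radialVelocity (n := n) (α := α) (β := β) (m := m) hcont
  have hforcing := continuous_radialForcing (n := n) (α := α) (β := β) hcont.rexp
  refine contDiffOn_two_of_hasDerivAt isOpen_Ioi (fun r hr ↦ hasDerivAt_of_forall hw hr)
    (fun r hr ↦ ((hasDerivAt_of_forall hw hr).const_mul m).neg.exp.mul
      (hasDerivAt_mul_radialForcing hn hcont.rexp hr (hasDerivAt_of_forall hw hr).exp))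
    (Continuous.continuousOn ?_)
  simp only [Pi.neg_apply]
  fun_prop

lemma IsCausalSolution.hasDerivWithinAt_exp_zero
    (hw : ∀ R, IsCausalSolution (radialVelocity n α β m) x₀ R w) :
    HasDerivWithinAt (fun r ↦ exp (w r)) 0 (Ici 0) 0 := by
  simpa [radialVelocity] using ((hw 1).hasDerivWithinAt 0 (by simp)).exp

lemma IsCausalSolution.isRadialSol (hn : 1 < n) (hm : m ≠ 0)
    (hw : ∀ R, IsCausalSolution (radialVelocity n α β m) x₀ R w) :
    IsRadialSol n m α β (exp x₀) fun r ↦ exp (w r) := by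
  have hcont := (hw 0).continuous
  refine ⟨fun r _ ↦ exp_pos _, hcont.rexp.continuousOn, (contDiffOn_two (by omega) hw).exp,
    hasDerivWithinAt_exp_zero hw, congrArg exp (hw 0).initial, fun r hr ↦ ?_⟩
  have hpow : (fun s ↦ exp (w s) ^ m) = fun s ↦ exp (m * w s) := by
    funext s
    rw [← exp_mul, mul_comm]
  have hΦ (t : ℝ) (ht : t > 0) : HasDerivAt (fun s ↦ exp (m * w s))
      (m * (t * radialForcing n α β (fun s ↦ exp (w s)) t)) t := by
    refine ((hasDerivAt_of_forall hw ht).const_mul m).exp.congr_deriv ?_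
    rw [radialVelocity, mul_left_comm, ← mul_assoc (exp (m * w t)), ← exp_add, add_neg_cancel,
      exp_zero, one_mul]
  have heq := radial_equation_of_hasDerivAt hn hcont.rexp
    (hasDerivAt_of_forall hw hr).exp.differentiableAt hΦ hr
  rw [hpow, div_mul_eq_mul_div, heq]
  field_simp
  ring

lemma IsCausalSolution.isLimitRadialSol (hn : 1 < n)
    (hw : ∀ R, IsCausalSolution (radialVelocity n α β 0) x₀ R w) :
    IsLimitRadialSol n α β (exp x₀) fun r ↦ exp (w r) where
  pos _ _ := exp_pos _
  continuousOn := (hw 0).continuous.rexp.continuousOn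
  contDiffOn := (contDiffOn_two (by omega) hw).exp
  initial := congrArg exp (hw 0).initial
  hasDerivWithinAt_zero := hasDerivWithinAt_exp_zero hw
  equation r hr := by
    have heq := radial_equation_of_hasDerivAt (α := α) (β := β) (a := 1) hn
      (hw 0).continuous.rexp (hasDerivAt_of_forall hw hr).exp.differentiableAt
      (fun t ht ↦ by simpa [radialVelocity] using hasDerivAt_of_forall hw ht) hr
    simp only [log_exp]
    linear_combination heq

lemma frequently_abs_deriv_le {P : ℝ → ℝ} {d : ℝ} (hP : HasDerivWithinAt P d (Ici 0) 0)
    (hdiff : DifferentiableOn ℝ P (Ioi 0)) : ∃ᶠ r in 𝓝[>] 0, |deriv P r| ≤ |d| + 1 := by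
  have hslope : ∀ᶠ r in 𝓝[>] 0, |slope P 0 r| < |d| + 1 :=
    (hasDerivWithinAt_iff_tendsto_slope' self_notMem_Ioi).1 hP.Ioi_of_Ici |>.abs.eventually_lt_const
      (lt_add_one _)
  refine frequently_iff.2 fun {U} hU ↦ ?_
  obtain ⟨δ, hδ, hδU⟩ := mem_nhdsGT_iff_exists_Ioo_subset.1 hU
  obtain ⟨r, hr, hr₀, hrδ⟩ := (hslope.and (Ioo_mem_nhdsGT hδ)).exists
  have hcont : ContinuousOn P (Icc 0 r) := fun x hx ↦ by
    rcases hx.1.eq_or_lt with rfl | hx₀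
    · exact hP.continuousWithinAt.mono Icc_subset_Ici_self
    · exact ((hdiff x hx₀).differentiableAt (Ioi_mem_nhds hx₀)).continuousAt.continuousWithinAt
  obtain ⟨ξ, hξ, hPξ⟩ :=
    exists_deriv_eq_slope P hr₀ hcont (hdiff.mono Ioo_subset_Ioi_self)
  refine ⟨ξ, hδU ⟨hξ.1, hξ.2.trans hrδ⟩, ?_⟩
  rw [hPξ, ← slope_def_field]
  exact hr.le

lemma eq_zero_of_hasDerivAt_neg_div_mul {z : ℝ → ℝ} {k C : ℝ} (hk : 0 < k)
    (hz : ∀ r > 0, HasDerivAt z (-(k / r) * z r) r) (hC : ∃ᶠ r in 𝓝[>] 0, |z r| ≤ C)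
    (hr : 0 < r) : z r = 0 := by
  have hderiv (t : ℝ) (ht : t ∈ Ioi 0) : HasDerivAt (fun t ↦ t ^ k * z t) 0 t := by
    refine ((hasDerivAt_rpow_const (.inl (ne_of_gt ht))).mul (hz t ht)).congr_deriv ?_
    rw [rpow_sub_one (ne_of_gt ht)]
    ring
  obtain ⟨c, hc⟩ : ∃ c, ∀ t ∈ Ioi 0, t ^ k * z t = c :=
    isOpen_Ioi.exists_is_const_of_deriv_eq_zero isPreconnected_Ioi
      (fun t ht ↦ (hderiv t ht).differentiableAt.differentiableWithinAt)
      fun t ht ↦ (hderiv t ht).deriv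
  have hlim : Tendsto (fun t : ℝ ↦ t ^ k * C) (𝓝[>] 0) (𝓝 0) := by
    have := ((continuousAt_rpow_const 0 k (.inr hk.le)).mul_const C).tendsto
    rw [zero_rpow hk.ne', zero_mul] at this
    exact this.mono_left nhdsWithin_le_nhds
  have hcC : ∃ᶠ t in 𝓝[>] 0, |c| ≤ t ^ k * C :=
    (hC.and_eventually self_mem_nhdsWithin).mono fun t ⟨htC, ht⟩ ↦ by
      rw [← hc t ht, abs_mul, abs_of_pos (rpow_pos_of_pos ht k)]
      exact mul_le_mul_of_nonneg_left htC (rpow_pos_of_pos ht k).le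
  have hc₀ : c = 0 := abs_nonpos_iff.1 (ge_of_tendsto_of_frequently hlim hcC)
  exact (mul_eq_zero.1 ((hc r hr).trans hc₀)).resolve_left (rpow_pos_of_pos hr k).ne'

lemma continuous_comp_max_zero (hv : ContinuousOn v (Ici 0)) : Continuous fun s ↦ v (max s 0) :=
  hv.comp_continuous (continuous_id.max continuous_const) fun s ↦ le_max_right s 0

lemma IsRadialSol.hasDerivAt (hv : IsRadialSol n m α β η v) (hr : 0 < r) :
    HasDerivAt v (deriv v r) r :=
  ((hv.2.2.1.contDiffAt (Ioi_mem_nhds hr)).differentiableAt two_ne_zero).hasDerivAt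

-- The defect `z` of the integrated equation satisfies `(r ^ (n - 1) z)' = 0`. As `v` is only known
-- to be differentiable at the origin, `z` might a priori blow up there, but the mean value theorem
-- bounds it along a sequence `r → 0`, which already forces the constant to vanish.
lemma IsRadialSol.deriv_rpow_eq (hn : 1 < n) (hm : m ≠ 0) (hv : IsRadialSol n m α β η v)
    (hr : 0 < r) :
    deriv (fun s ↦ v s ^ m) r
      = m * (r * radialForcing n α β (fun s ↦ v (max s 0)) r) := by
  have hvd (t : ℝ) (ht : t > 0) : HasDerivAt (fun s ↦ v (max s 0)) (deriv v t) t := by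
    refine (hv.hasDerivAt ht).congr_of_eventuallyEq ?_
    filter_upwards [lt_mem_nhds ht] with s hs using by rw [max_eq_left hs.le]
  obtain ⟨hpos, hcont, hC2, hv₀, -, heq⟩ := hv
  have hext := continuous_comp_max_zero hcont
  have hP : ContDiffOn ℝ 2 (fun s ↦ v s ^ m) (Ioi 0) :=
    hC2.rpow_const_of_ne fun s hs ↦ (hpos s (Ioi_subset_Ici_self hs)).ne'
  have hP' : DifferentiableOn ℝ (deriv fun s ↦ v s ^ m) (Ioi 0) :=
    ((contDiffOn_succ_iff_deriv_of_isOpen (n := 1) isOpen_Ioi).1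
      (by simpa [one_add_one_eq_two] using hP)).2.2.differentiableOn one_ne_zero
  set z : ℝ → ℝ := fun t ↦ deriv (fun s ↦ v s ^ m) t
    - m * (t * radialForcing n α β (fun s ↦ v (max s 0)) t)
  have hz (t : ℝ) (ht : t > 0) : HasDerivAt z (-((n - 1) / t) * z t) t := by
    refine (((hP' t ht).differentiableAt (Ioi_mem_nhds ht)).hasDerivAt.sub
      ((hasDerivAt_mul_radialForcing (by omega) hext ht (hvd t ht)).const_mul m)).congr_deriv ?_
    have heqt := heq t ht
    have hn₁ : (n : ℝ) - 1 ≠ 0 := sub_ne_zero.2 (by exact_mod_cast hn.ne')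
    simp only [z, max_eq_left ht.le]
    field_simp at heqt ⊢
    linear_combination heqt
  have hbdd : ∃ᶠ t in 𝓝[>] 0, |z t| ≤ |0 * m * v 0 ^ (m - 1)| + 1 + 1 := by
    have hforcing := continuous_radialForcing (n := n) (α := α) (β := β) hext
    have hc : Continuous fun t ↦ |m * (t * radialForcing n α β (fun s ↦ v (max s 0)) t)| := by
      fun_prop
    have hsmall := hc.tendsto 0 |>.eventually_lt_const (u := 1) (by simp)
    refine ((frequently_abs_deriv_le (hv₀.rpow_const (.inl (hpos 0 self_mem_Ici).ne'))
      (hP.differentiableOn two_ne_zero)).and_eventually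
      (hsmall.filter_mono nhdsWithin_le_nhds)).mono fun t ht ↦ ?_
    exact (abs_sub _ _).trans (add_le_add ht.1 ht.2.le)
  have hn₁ : (0 : ℝ) < n - 1 := sub_pos.2 (Nat.one_lt_cast.2 hn)
  exact sub_eq_zero.1 (eq_zero_of_hasDerivAt_neg_div_mul (z := z) hn₁ hz hbdd hr)

/-- The logarithm of a profile on `[0, ∞)`, extended by a constant to the negative axis. -/
noncomputable def logProfile (v : ℝ → ℝ) (r : ℝ) : ℝ := log (v (max r 0))

lemma IsRadialSol.exp_logProfile (hv : IsRadialSol n m α β η v) (r : ℝ) :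
    exp (logProfile v r) = v (max r 0) :=
  exp_log (hv.1 _ (le_max_right r 0))

lemma IsRadialSol.isCausalSolution (hn : 1 < n) (hm : m ≠ 0) (hv : IsRadialSol n m α β η v)
    (R : ℝ) : IsCausalSolution (radialVelocity n α β m) (log η) R (logProfile v) := by
  have hpow := fun r (hr : 0 < r) ↦ hv.deriv_rpow_eq hn hm hr
  have hexp := hv.exp_logProfile
  have hderiv := fun r (hr : 0 < r) ↦ hv.hasDerivAt hr
  obtain ⟨hpos, hcont, -, hv₀, hη, -⟩ := hv
  have heq : EqOn (logProfile v) (fun r ↦ log (v r)) (Ici 0) := fun r hr ↦ by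
    rw [logProfile, max_eq_left hr]
  refine ⟨?_, by rw [logProfile, max_self, hη], fun r hr ↦ ?_⟩
  · exact (continuous_comp_max_zero hcont).log fun s ↦ (hpos _ (le_max_right s 0)).ne'
  rcases hr.1.eq_or_lt with rfl | hr₀
  · simpa [radialVelocity] using (hv₀.log (hpos 0 self_mem_Ici).ne').congr heq (heq self_mem_Ici)
  · have hvr := hpos r hr.1
    have hd := hderiv r hr₀
    have hvd : deriv v r * v r ^ (m - 1) = r * radialForcing n α β (fun s ↦ v (max s 0)) r := by
      refine mul_left_cancel₀ hm ?_
      rw [← hpow r hr₀, (hd.rpow_const (.inl hvr.ne')).deriv]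
      ring
    refine ((hd.log hvr.ne').hasDerivWithinAt.congr heq (heq hr.1)).congr_deriv ?_
    simp_rw [radialVelocity, hexp]
    rw [← hvd, heq hr.1, mul_comm m, ← mul_neg, exp_mul, exp_log hvr, rpow_neg hvr.le,
      rpow_sub_one hvr.ne']
    have := (rpow_pos_of_pos hvr m).ne'
    field_simp

end LogarithmicProfile

section LimitExponentZero

open scoped Topology

/-! ### The limit as the exponent tends to zero -/

variable {n : ℕ} {α β η x₀ R : ℝ} {l : Filter ℝ} {w : ℝ → ℝ} {V W : ℝ → ℝ → ℝ}

lemma exists_mapsTo_Icc_of_isCausalSolution (hn : 1 < n) (α β x₀ R : ℝ) :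
    ∃ L, ∀ m, |m| ≤ 1 → IsAdmissibleExponent n α β m → ∀ w,
      IsCausalSolution (radialVelocity n α β m) x₀ R w → MapsTo w (Icc 0 R) (Icc (-L) L) := by
  obtain ⟨κ, hκ, hvel⟩ := exists_abs_radialVelocity_le hn α β x₀
  refine ⟨|x₀| + κ * R, fun m hm hadm w hw t ht ↦ abs_le.1 ?_⟩
  calc |w t| ≤ |x₀| + κ * t := hw.abs_le_add_mul (hvel m hm hadm R w hw) t ht
    _ ≤ |x₀| + κ * R := by gcongr; exact ht.2

lemma eventually_abs_le_one : ∀ᶠ m in 𝓝 (0 : ℝ), |m| ≤ 1 :=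
  (continuous_abs.tendsto 0).eventually_le_const (by simp)

lemma eventually_abs_radialVelocity_sub_le (hn : n ≠ 0) (α β L R : ℝ) {ε : ℝ} (hε : 0 < ε) :
    ∀ᶠ m in 𝓝 0, ∀ f : ℝ → ℝ, Continuous f → MapsTo f (Icc 0 R) (Icc (-L) L) →
      ∀ t ∈ Ico 0 R, |radialVelocity n α β m f t - radialVelocity n α β 0 f t| ≤ ε := by
  have hlim : ∀ᶠ m in 𝓝 (0 : ℝ),
      exp (1 * L) * (R * (radialForcingBound n α β * exp L)) * (L * |m|) < ε :=
    (Continuous.tendsto (by fun_prop) 0).eventually_lt_const (by simpa using hε)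
  filter_upwards [hlim, eventually_abs_le_one] with m hmε hm f hf hfL t ht
  have hfL' (s : ℝ) (hs : s ∈ Icc 0 t) : |f s| ≤ L := abs_le.2 (hfL ⟨hs.1, hs.2.trans ht.2.le⟩)
  have hL : 0 ≤ L := (abs_nonneg _).trans (hfL' t ⟨ht.1, le_rfl⟩)
  calc |radialVelocity n α β m f t - radialVelocity n α β 0 f t|
      ≤ exp (1 * L) * (t * (radialForcingBound n α β * exp L)) * ((1 + 1) * 0 + L * |m - 0|) :=
        abs_radialVelocity_sub_le hn hf hf hm (by simp) ht.1 hfL' hfL' fun s _ ↦ by simp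
    _ = exp (1 * L) * (t * (radialForcingBound n α β * exp L)) * (L * |m|) := by simp
    _ ≤ exp (1 * L) * (R * (radialForcingBound n α β * exp L)) * (L * |m|) := by
        have := radialForcingBound_nonneg (n := n) (α := α) (β := β)
        gcongr
        exact ht.2.le
    _ ≤ ε := hmε.le

lemma tendstoUniformlyOn_exp_isCausalSolution (hn : 2 < n) (hαβ : 0 < β ∨ α = 0) (hl : l ≤ 𝓝 0)
    (hw : IsCausalSolution (radialVelocity n α β 0) x₀ R w)
    (hW : ∀ᶠ m in l, IsCausalSolution (radialVelocity n α β m) x₀ R (W m)) :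
    TendstoUniformlyOn (fun m r ↦ exp (W m r)) (fun r ↦ exp (w r)) l (Icc 0 R) := by
  have hadm := eventually_isAdmissibleExponent hn hαβ
  obtain ⟨L, hL⟩ := exists_mapsTo_Icc_of_isCausalSolution (n := n) (by omega) α β x₀ R
  have hwL := hL 0 (by simp) hadm.self_of_nhds w hw
  have hWL : ∀ᶠ m in l, MapsTo (W m) (Icc 0 R) (Icc (-L) L) := by
    filter_upwards [hl hadm, hl eventually_abs_le_one, hW] with m hadm hm hW using
      hL m hm hadm (W m) hW
  obtain ⟨K, hK⟩ := (isLocallyCausalLipschitz_radialVelocity (n := n) (α := α) (β := β) (m := 0)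
    (by omega)).exists_isCausalLipschitz L R
  have hconv : TendstoUniformlyOn W w l (Icc 0 R) :=
    hK.tendstoUniformlyOn hw hwL hW hWL fun ε hε ↦ by
      have hclose := eventually_abs_radialVelocity_sub_le (n := n) (by omega) α β L R hε
      filter_upwards [hl hclose, hW, hWL] with m hm hW hWL using hm (W m) hW.continuous hWL
  exact (isCompact_Icc.uniformContinuousOn_of_continuous
    continuous_exp.continuousOn).comp_tendstoUniformlyOn_eventually hWL hwL hconv

lemma tendstoUniformlyOn_isRadialSol (hn : 2 < n) (hαβ : 0 < β ∨ α = 0)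
    (hw : ∀ R, IsCausalSolution (radialVelocity n α β 0) (log η) R w)
    (hV : ∀ᶠ m in 𝓝[>] 0, IsRadialSol n m α β η (V m)) {K : Set ℝ} (hK : IsCompact K)
    (hK₀ : K ⊆ Ici 0) :
    TendstoUniformlyOn V (fun r ↦ exp (w r)) (𝓝[>] 0) K := by
  obtain ⟨R, hR⟩ := hK.bddAbove
  have hW : ∀ᶠ m in 𝓝[>] 0,
      IsCausalSolution (radialVelocity n α β m) (log η) R (logProfile (V m)) := by
    filter_upwards [hV, self_mem_nhdsWithin] with m hVm hm using
      hVm.isCausalSolution (by omega) (ne_of_gt hm) R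
  refine ((tendstoUniformlyOn_exp_isCausalSolution hn hαβ nhdsWithin_le_nhds (hw R) hW).mono
    fun r hr ↦ ⟨hK₀ hr, hR hr⟩).congr ?_
  filter_upwards [hV] with m hVm r hr
  have hr₀ : 0 ≤ r := hK₀ hr
  simp only [hVm.exp_logProfile, max_eq_left hr₀]

end LimitExponentZero

theorem stmt2 (n : ℕ) (hn : 3 ≤ n) (α β η : ℝ) (hη : 0 < η)
    (hαβ : 0 < β ∨ α = 0)
    (V : ℝ → ℝ → ℝ)
    (hV : ∀ m ∈ Set.Ioc (0:ℝ) (((n : ℝ) - 2) / n),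
      (∃ v : ℝ → ℝ, IsRadialSol n m α β η v) → IsRadialSol n m α β η (V m)) :
    ∃ u : ℝ → ℝ,
      (∀ r ∈ Set.Ici (0:ℝ), 0 < u r) ∧
      ContinuousOn u (Set.Ici (0:ℝ)) ∧
      ContDiffOn ℝ 2 u (Set.Ioi (0:ℝ)) ∧
      u 0 = η ∧
      HasDerivWithinAt u 0 (Set.Ici (0:ℝ)) 0 ∧
      (∀ r ∈ Set.Ioi (0:ℝ),
        ((n : ℝ) - 1) * (deriv (deriv (fun s => Real.log (u s))) r
          + (((n : ℝ) - 1) / r) * deriv (fun s => Real.log (u s)) r)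
        + α * u r + β * r * deriv u r = 0) ∧
      (∀ K : Set ℝ, K ⊆ Set.Ici (0:ℝ) → IsCompact K →
        TendstoUniformlyOn V u (nhdsWithin (0:ℝ) (Set.Ioi (0:ℝ))) K) := by
  have hn₁ : 1 < n := by omega
  have hadm := eventually_isAdmissibleExponent hn hαβ
  obtain ⟨w, hw⟩ := exists_forall_isCausalSolution_radialVelocity hn₁ (by simp)
    hadm.self_of_nhds (log η)
  have hu : IsLimitRadialSol n α β η fun r ↦ exp (w r) :=
    exp_log hη ▸ IsCausalSolution.isLimitRadialSol hn₁ hw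
  have hm₀ : (0 : ℝ) < (n - 2) / n :=
    div_pos (sub_pos.2 (by exact_mod_cast hn)) (by exact_mod_cast hn₁.pos)
  have hsol : ∀ᶠ m in nhdsWithin 0 (Ioi 0), IsRadialSol n m α β η (V m) := by
    filter_upwards [Ioc_mem_nhdsGT hm₀, nhdsWithin_le_nhds hadm,
      nhdsWithin_le_nhds eventually_abs_le_one] with m hm hadm hm₁
    obtain ⟨wₘ, hwₘ⟩ := exists_forall_isCausalSolution_radialVelocity hn₁ hm₁ hadm (log η)
    exact hV m hm ⟨_, exp_log hη ▸ IsCausalSolution.isRadialSol hn₁ hm.1.ne' hwₘ⟩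
  exact ⟨_, hu.pos, hu.continuousOn, hu.contDiffOn, hu.initial, hu.hasDerivWithinAt_zero,
    hu.equation, fun K hK₀ hK ↦ tendstoUniformlyOn_isRadialSol hn hαβ hw hsol hK hK₀⟩
end
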